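/- arXiv:2207.06129 — 2 statements merged into one kernel-verified Lean document; each statement's English description precedes it below -/
import Mathlib

section
/- Let 0 < α < n, 1/q = 1 − α/n, and w ∈ A_{1,q}. Then there exists a constant C > 0, independent of f, a, and r, such that for every a ∈ ℝⁿ, r > 0, and f ∈ L^{1,w}_loc: ‖I_α f‖_{WL^{q,w^q}(B(a,r))} ≤ C·w^q(B(a,r))^{1/q}·∫_r^∞ w^q(B(a,s))^{-1/q} ‖f‖_{L^{1,w}(B(a,s))} ds/s, where w^q(B) = ∫_B w(x)^q dx. -/
open MeasureTheory Metric Set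
open scoped ENNReal

noncomputable section

/-- The weighted measure of a set: `w(E) = ∫_E w(x) dx`, valued in `ℝ≥0∞`. -/
def wSet {n : ℕ} (w : EuclideanSpace ℝ (Fin n) → ℝ)
    (E : Set (EuclideanSpace ℝ (Fin n))) : ℝ≥0∞ :=
  ∫⁻ x in E, ENNReal.ofReal (w x)

/-- The weighted Lebesgue norm `‖f‖_{L^{p,w}(Ω)} = (∫_Ω |f(x)|^p w(x) dx)^{1/p}`. -/
def wLp {n : ℕ} (p : ℝ) (w f : EuclideanSpace ℝ (Fin n) → ℝ)
    (Ω : Set (EuclideanSpace ℝ (Fin n))) : ℝ≥0∞ :=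
  (∫⁻ x in Ω, ENNReal.ofReal |f x| ^ p * ENNReal.ofReal (w x)) ^ (1 / p)

/-- The weighted Lebesgue norm for an `ℝ≥0∞`-valued function. -/
def wLpE {n : ℕ} (p : ℝ) (w : EuclideanSpace ℝ (Fin n) → ℝ)
    (g : EuclideanSpace ℝ (Fin n) → ℝ≥0∞) (Ω : Set (EuclideanSpace ℝ (Fin n))) : ℝ≥0∞ :=
  (∫⁻ x in Ω, g x ^ p * ENNReal.ofReal (w x)) ^ (1 / p)

/-- The weak weighted Lebesgue norm `‖f‖_{WL^{p,w}(Ω)} = sup_{γ>0} γ·w({x ∈ Ω : |f(x)| > γ})^{1/p}`. -/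
def wWeakLp {n : ℕ} (p : ℝ) (w f : EuclideanSpace ℝ (Fin n) → ℝ)
    (Ω : Set (EuclideanSpace ℝ (Fin n))) : ℝ≥0∞ :=
  ⨆ γ : Set.Ioi (0 : ℝ),
    ENNReal.ofReal γ.1 * (wSet w {x | x ∈ Ω ∧ γ.1 < |f x|}) ^ (1 / p)

/-- The weak weighted Lebesgue norm for an `ℝ≥0∞`-valued function. -/
def wWeakLpE {n : ℕ} (p : ℝ) (w : EuclideanSpace ℝ (Fin n) → ℝ)
    (g : EuclideanSpace ℝ (Fin n) → ℝ≥0∞) (Ω : Set (EuclideanSpace ℝ (Fin n))) : ℝ≥0∞ :=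
  ⨆ γ : Set.Ioi (0 : ℝ),
    ENNReal.ofReal γ.1 * (wSet w {x | x ∈ Ω ∧ ENNReal.ofReal γ.1 < g x}) ^ (1 / p)

/-- `f ∈ L^{p,w}_loc`: `f` is measurable and `‖f‖_{L^{p,w}(B)} < ∞` on every ball. -/
def MemLocWLp {n : ℕ} (p : ℝ) (w f : EuclideanSpace ℝ (Fin n) → ℝ) : Prop :=
  Measurable f ∧ ∀ (a : EuclideanSpace ℝ (Fin n)) (r : ℝ), 0 < r → wLp p w f (ball a r) < ⊤

/-- A weight: nonnegative, measurable, locally integrable, positive a.e. -/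
def IsWeight {n : ℕ} (w : EuclideanSpace ℝ (Fin n) → ℝ) : Prop :=
  Measurable w ∧ (∀ x, 0 ≤ w x) ∧ LocallyIntegrable w volume ∧ ∀ᵐ x ∂volume, 0 < w x

/-- The Muckenhoupt class `A_p` for `1 < p`. -/
def MuckAp {n : ℕ} (p : ℝ) (w : EuclideanSpace ℝ (Fin n) → ℝ) : Prop :=
  ∃ C : ℝ, 0 < C ∧ ∀ (a : EuclideanSpace ℝ (Fin n)) (r : ℝ), 0 < r →
    ((volume (ball a r))⁻¹ * ∫⁻ x in ball a r, ENNReal.ofReal (w x)) *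
      ((volume (ball a r))⁻¹ *
        ∫⁻ x in ball a r, ENNReal.ofReal (w x ^ (-(1 / (p - 1))))) ^ (p - 1) ≤
      ENNReal.ofReal C

/-- The Muckenhoupt class `A_1`. -/
def MuckA1 {n : ℕ} (w : EuclideanSpace ℝ (Fin n) → ℝ) : Prop :=
  ∃ C : ℝ, 0 < C ∧ ∀ (a : EuclideanSpace ℝ (Fin n)) (r : ℝ), 0 < r →
    ((volume (ball a r))⁻¹ * ∫⁻ x in ball a r, ENNReal.ofReal (w x)) *
      essSup (fun x => ENNReal.ofReal (w x)⁻¹) (volume.restrict (ball a r)) ≤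
      ENNReal.ofReal C

/-- The class `A_{p,q}` for `1 < p`, where `p'` is the conjugate exponent of `p`. -/
def MuckApq {n : ℕ} (p q p' : ℝ) (w : EuclideanSpace ℝ (Fin n) → ℝ) : Prop :=
  ∃ C : ℝ, 0 < C ∧ ∀ (a : EuclideanSpace ℝ (Fin n)) (r : ℝ), 0 < r →
    ((volume (ball a r))⁻¹ * ∫⁻ x in ball a r, ENNReal.ofReal (w x ^ q)) ^ (1 / q) *
      ((volume (ball a r))⁻¹ * ∫⁻ x in ball a r, ENNReal.ofReal (w x ^ (-p'))) ^ (1 / p') ≤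
      ENNReal.ofReal C

/-- The class `A_{1,q}`. -/
def MuckA1q {n : ℕ} (q : ℝ) (w : EuclideanSpace ℝ (Fin n) → ℝ) : Prop :=
  ∃ C : ℝ, 0 < C ∧ ∀ (a : EuclideanSpace ℝ (Fin n)) (r : ℝ), 0 < r →
    ((volume (ball a r))⁻¹ * ∫⁻ x in ball a r, ENNReal.ofReal (w x ^ q)) ^ (1 / q) *
      essSup (fun x => ENNReal.ofReal (w x)⁻¹) (volume.restrict (ball a r)) ≤
      ENNReal.ofReal C

/-- The Hardy–Littlewood maximal operator. -/
def HLMax {n : ℕ} (f : EuclideanSpace ℝ (Fin n) → ℝ)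
    (x : EuclideanSpace ℝ (Fin n)) : ℝ≥0∞ :=
  ⨆ r : Set.Ioi (0 : ℝ), (volume (ball x r.1))⁻¹ * ∫⁻ y in ball x r.1, ENNReal.ofReal |f y|

/-- The fractional integral operator `I_α` (applied to `|f|`, valued in `ℝ≥0∞`). -/
def fracIntE {n : ℕ} (α : ℝ) (f : EuclideanSpace ℝ (Fin n) → ℝ)
    (x : EuclideanSpace ℝ (Fin n)) : ℝ≥0∞ :=
  ∫⁻ y, ENNReal.ofReal |f y| / ENNReal.ofReal (dist x y ^ ((n : ℝ) - α))

/-- The fractional maximal operator `M_α`. -/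
def fracMax {n : ℕ} (α : ℝ) (f : EuclideanSpace ℝ (Fin n) → ℝ)
    (x : EuclideanSpace ℝ (Fin n)) : ℝ≥0∞ :=
  ⨆ r : Set.Ioi (0 : ℝ),
    (volume (ball x r.1)) ^ (α / (n : ℝ) - 1) * ∫⁻ y in ball x r.1, ENNReal.ofReal |f y|

/-- The generalized weighted Morrey norm `‖f‖_{M^{p,w}_ψ}`. -/
def morreyNorm {n : ℕ} (p : ℝ) (w : EuclideanSpace ℝ (Fin n) → ℝ)
    (ψ : EuclideanSpace ℝ (Fin n) → ℝ → ℝ) (f : EuclideanSpace ℝ (Fin n) → ℝ) : ℝ≥0∞ :=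
  ⨆ (a : EuclideanSpace ℝ (Fin n)) (r : Set.Ioi (0 : ℝ)),
    (ENNReal.ofReal (ψ a r.1))⁻¹ * wSet w (ball a r.1) ^ (-(1 / p)) * wLp p w f (ball a r.1)

/-- The generalized weighted Morrey norm for an `ℝ≥0∞`-valued function. -/
def morreyNormE {n : ℕ} (p : ℝ) (w : EuclideanSpace ℝ (Fin n) → ℝ)
    (ψ : EuclideanSpace ℝ (Fin n) → ℝ → ℝ) (g : EuclideanSpace ℝ (Fin n) → ℝ≥0∞) : ℝ≥0∞ :=
  ⨆ (a : EuclideanSpace ℝ (Fin n)) (r : Set.Ioi (0 : ℝ)),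
    (ENNReal.ofReal (ψ a r.1))⁻¹ * wSet w (ball a r.1) ^ (-(1 / p)) * wLpE p w g (ball a r.1)

/-- The generalized weighted weak Morrey norm `‖f‖_{WM^{p,w}_ψ}`. -/
def morreyWeakNorm {n : ℕ} (p : ℝ) (w : EuclideanSpace ℝ (Fin n) → ℝ)
    (ψ : EuclideanSpace ℝ (Fin n) → ℝ → ℝ) (f : EuclideanSpace ℝ (Fin n) → ℝ) : ℝ≥0∞ :=
  ⨆ (a : EuclideanSpace ℝ (Fin n)) (r : Set.Ioi (0 : ℝ)),
    (ENNReal.ofReal (ψ a r.1))⁻¹ * wSet w (ball a r.1) ^ (-(1 / p)) * wWeakLp p w f (ball a r.1)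

/-- The generalized weighted weak Morrey norm for an `ℝ≥0∞`-valued function. -/
def morreyWeakNormE {n : ℕ} (p : ℝ) (w : EuclideanSpace ℝ (Fin n) → ℝ)
    (ψ : EuclideanSpace ℝ (Fin n) → ℝ → ℝ) (g : EuclideanSpace ℝ (Fin n) → ℝ≥0∞) : ℝ≥0∞ :=
  ⨆ (a : EuclideanSpace ℝ (Fin n)) (r : Set.Ioi (0 : ℝ)),
    (ENNReal.ofReal (ψ a r.1))⁻¹ * wSet w (ball a r.1) ^ (-(1 / p)) * wWeakLpE p w g (ball a r.1)

end

/-!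
Put `θ = 1/q`, `β = n - α = n/q` and `μ = w^q dx`. The condition `A_{1,q}` says that the uncentred
maximal function of `w ^ q` is at most `K w ^ q` almost everywhere. Two consequences are used:

* `∫_S |x - y|^{-β} dμ(x) ≤ C w(y) μ(S)^{1-θ}` for every `S` and almost every `y`, because
  `μ(B(y,s)) ≤ K w(y)^q s^n`. By Fubini, the part of `f` in `B(a,2r)` contributes at most
  `C μ(S)^{1-θ} ∫_{B(a,2r)} |f| w` to `∫_S I_α f dμ`;
* `∫_B |f| ≤ C s^β μ(B)^{-θ} ∫_B |f| w` on balls `B` of radius `s`. Integrated against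
  `s^{-β-1} ds`, this bounds the potential of the part of `f` outside `B(a,2r)`, pointwise on
  `B(a,r)`, by the integral on the right-hand side.

Taking `S = {x ∈ B(a,r) : I_α f(x) > γ}` and dividing `γ μ(S) ≤ ∫_S I_α f dμ` by `μ(S)^{1-θ}` gives
the weak-type bound, and doubling of `μ` absorbs `∫_{B(a,2r)} |f| w` into the integral over `s > r`.
Lebesgue measure enters only through its Ahlfors regularity.
-/

open scoped NNReal

section PowerIntegrals

theorem lintegral_Ioi_rpow_neg_sub_one {β d : ℝ} (hβ : 0 < β) (hd : 0 < d) :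
    ∫⁻ s in Ioi d, ENNReal.ofReal s ^ (-β - 1) =
      ENNReal.ofReal d ^ (-β) / ENNReal.ofReal β := by
  have hexp : -β - 1 < -1 := by linarith
  calc ∫⁻ s in Ioi d, ENNReal.ofReal s ^ (-β - 1)
      = ∫⁻ s in Ioi d, ENNReal.ofReal (s ^ (-β - 1)) :=
        setLIntegral_congr_fun measurableSet_Ioi fun s hs =>
          ENNReal.ofReal_rpow_of_pos (hd.trans hs)
    _ = ENNReal.ofReal (∫ s in Ioi d, s ^ (-β - 1)) :=
        (ofReal_integral_eq_lintegral_ofReal (integrableOn_Ioi_rpow_of_lt hexp hd)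
          ((ae_restrict_mem measurableSet_Ioi).mono fun s hs =>
            Real.rpow_nonneg (hd.trans hs).le _)).symm
    _ = ENNReal.ofReal d ^ (-β) / ENNReal.ofReal β := by
        rw [integral_Ioi_rpow_of_lt hexp hd, ENNReal.ofReal_rpow_of_pos hd,
          ← ENNReal.ofReal_div_of_pos hβ, sub_add_cancel, neg_div_neg_eq]

theorem lintegral_Ioc_rpow_sub_one {β R : ℝ} (hβ : 0 < β) (hR : 0 < R) :
    ∫⁻ s in Ioc 0 R, ENNReal.ofReal s ^ (β - 1) = ENNReal.ofReal R ^ β / ENNReal.ofReal β := by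
  have hexp : -1 < β - 1 := by linarith
  have hint := (intervalIntegrable_iff_integrableOn_Ioc_of_le hR.le).1
    (intervalIntegral.intervalIntegrable_rpow' (a := 0) (b := R) hexp)
  calc ∫⁻ s in Ioc 0 R, ENNReal.ofReal s ^ (β - 1)
      = ∫⁻ s in Ioc 0 R, ENNReal.ofReal (s ^ (β - 1)) :=
        setLIntegral_congr_fun measurableSet_Ioc fun s hs => ENNReal.ofReal_rpow_of_pos hs.1
    _ = ENNReal.ofReal (∫ s in Ioc 0 R, s ^ (β - 1)) :=
        (ofReal_integral_eq_lintegral_ofReal hint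
          ((ae_restrict_mem measurableSet_Ioc).mono fun s hs => Real.rpow_nonneg hs.1.le _)).symm
    _ = ENNReal.ofReal R ^ β / ENNReal.ofReal β := by
        rw [← intervalIntegral.integral_of_le hR.le, integral_rpow (Or.inl hexp),
          ENNReal.ofReal_rpow_of_pos hR, ← ENNReal.ofReal_div_of_pos hβ, sub_add_cancel,
          Real.zero_rpow hβ.ne', sub_zero]

theorem lintegral_Ioi_zero_rpow_eq_top (p : ℝ) :
    ∫⁻ s in Ioi (0 : ℝ), ENNReal.ofReal s ^ p = ∞ := by
  by_contra hfin
  refine not_integrableOn_Ioi_rpow p ⟨by fun_prop, ?_⟩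
  rw [hasFiniteIntegral_iff_ofReal ((ae_restrict_mem measurableSet_Ioi).mono fun s hs =>
    Real.rpow_nonneg (mem_Ioi.1 hs).le _)]
  rwa [← setLIntegral_congr_fun measurableSet_Ioi fun s hs => ENNReal.ofReal_rpow_of_pos hs,
    lt_top_iff_ne_top]

theorem ennreal_rpow_neg_eq_lintegral {β : ℝ} (hβ : 0 < β) (e : ℝ≥0∞) :
    e ^ (-β) =
      ENNReal.ofReal β * ∫⁻ s in {s | e < ENNReal.ofReal s}, ENNReal.ofReal s ^ (-β - 1) := by
  have hβ' : ENNReal.ofReal β ≠ 0 := by simpa using hβ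
  rcases eq_or_ne e ∞ with rfl | he
  · simp [hβ]
  have hset : {s | e < ENNReal.ofReal s} = Ioi e.toReal := by
    ext s
    exact ENNReal.lt_ofReal_iff_toReal_lt he
  rw [hset]
  rcases eq_or_ne e 0 with rfl | he0
  · rw [ENNReal.toReal_zero, lintegral_Ioi_zero_rpow_eq_top, ENNReal.mul_top hβ',
      ENNReal.zero_rpow_of_neg (neg_lt_zero.2 hβ)]
  · rw [lintegral_Ioi_rpow_neg_sub_one hβ (ENNReal.toReal_pos he0 he), ENNReal.ofReal_toReal he,
      ENNReal.mul_div_cancel hβ' ENNReal.ofReal_ne_top]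

theorem exists_balancing_radius {p β : ℝ} (hp : 0 < p) {A M : ℝ≥0∞} (hA0 : A ≠ 0) (hAt : A ≠ ∞)
    (hM0 : M ≠ 0) (hMt : M ≠ ∞) :
    ∃ R : ℝ, 0 < R ∧ A * ENNReal.ofReal R ^ (p - β) = A ^ (β / p) * M ^ (1 - β / p) ∧
      M * ENNReal.ofReal R ^ (-β) = A ^ (β / p) * M ^ (1 - β / p) := by
  have hQ0 : M / A ≠ 0 := by simp [ENNReal.div_eq_zero_iff, hM0, hAt]
  have hQt : M / A ≠ ∞ := by simp [ENNReal.div_eq_top, hA0, hMt]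
  obtain ⟨T, hT⟩ : ∃ T, T = (M / A) ^ (1 / p) := ⟨_, rfl⟩
  have hT0 : T ≠ 0 := by simp [hT, ENNReal.rpow_eq_zero_iff, hQ0, hQt]
  have hTt : T ≠ ∞ := by simp [hT, ENNReal.rpow_eq_top_iff, hQ0, hQt]
  have hATp : A * T ^ p = M := by
    rw [hT, ← ENNReal.rpow_mul, one_div_mul_cancel hp.ne', ENNReal.rpow_one,
      ENNReal.mul_div_cancel hA0 hAt]
  have hTβ : T ^ (-β) = A ^ (β / p) * M ^ (-(β / p)) := by
    rw [hT, ← ENNReal.rpow_mul, show 1 / p * -β = -(β / p) by ring, div_eq_mul_inv,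
      ENNReal.mul_rpow_of_ne_top hMt (ENNReal.inv_ne_top.2 hA0), ENNReal.inv_rpow,
      ENNReal.rpow_neg A, inv_inv, mul_comm]
  have htail : M * T ^ (-β) = A ^ (β / p) * M ^ (1 - β / p) := by
    rw [hTβ, sub_eq_add_neg, ENNReal.rpow_add _ _ hM0 hMt, ENNReal.rpow_one, mul_left_comm]
  refine ⟨T.toReal, ENNReal.toReal_pos hT0 hTt, ?_, ?_⟩ <;> rw [ENNReal.ofReal_toReal hTt]
  · rw [sub_eq_add_neg, ENNReal.rpow_add _ _ hT0 hTt, ← mul_assoc, hATp, htail]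
  · exact htail

end PowerIntegrals

section NegativeMoments

variable {Ω : Type*} [MeasurableSpace Ω] {μ : Measure Ω} {ρ : Ω → ℝ≥0∞} {β : ℝ}

theorem lintegral_rpow_neg_eq_lintegral_meas_lt [SFinite μ] (hρ : Measurable ρ) (hβ : 0 < β) :
    ∫⁻ ω, ρ ω ^ (-β) ∂μ = ENNReal.ofReal β *
      ∫⁻ s in Ioi (0 : ℝ), μ {ω | ρ ω < ENNReal.ofReal s} * ENNReal.ofReal s ^ (-β - 1) := by
  have hsub : MeasurableSet {p : Ω × ℝ | ρ p.1 < ENNReal.ofReal p.2} :=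
    measurableSet_lt (by fun_prop) (by fun_prop)
  let φ : Ω → ℝ → ℝ≥0∞ := fun ω =>
    {s : ℝ | ρ ω < ENNReal.ofReal s}.indicator fun s => ENNReal.ofReal s ^ (-β - 1)
  have hφ : Measurable (Function.uncurry φ) :=
    Measurable.indicator (f := fun p : Ω × ℝ => ENNReal.ofReal p.2 ^ (-β - 1)) (by fun_prop) hsub
  have hslice : ∀ s : ℝ, MeasurableSet {ω | ρ ω < ENNReal.ofReal s} :=
    fun s => measurableSet_lt hρ measurable_const
  calc ∫⁻ ω, ρ ω ^ (-β) ∂μ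
      = ∫⁻ ω, ENNReal.ofReal β * ∫⁻ s, φ ω s ∂volume ∂μ := by
        refine lintegral_congr fun ω => ?_
        rw [ennreal_rpow_neg_eq_lintegral hβ, lintegral_indicator
          (measurableSet_lt measurable_const ENNReal.measurable_ofReal)]
    _ = ENNReal.ofReal β * ∫⁻ s, ∫⁻ ω, φ ω s ∂μ := by
        rw [lintegral_const_mul' _ _ ENNReal.ofReal_ne_top,
          lintegral_lintegral_swap hφ.aemeasurable]
    _ = ENNReal.ofReal β *
          ∫⁻ s, μ {ω | ρ ω < ENNReal.ofReal s} * ENNReal.ofReal s ^ (-β - 1) := by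
        congr 1
        refine lintegral_congr fun s => ?_
        rw [mul_comm, ← lintegral_indicator_const (hslice s)]
        rfl
    _ = _ := by
        rw [setLIntegral_eq_of_support_subset]
        intro s hs
        by_contra hs0
        refine hs ?_
        simp [ENNReal.ofReal_of_nonpos (not_lt.1 hs0)]

theorem setLIntegral_rpow_neg_le_lintegral_Ioi [SFinite μ] (hρ : Measurable ρ) (hβ : 0 < β)
    {R : ℝ} (hR : 0 ≤ R) :
    ∫⁻ ω in {ω | ENNReal.ofReal R ≤ ρ ω}, ρ ω ^ (-β) ∂μ ≤ ENNReal.ofReal β *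
      ∫⁻ s in Ioi R, μ {ω | ρ ω < ENNReal.ofReal s} * ENNReal.ofReal s ^ (-β - 1) := by
  set E := {ω | ENNReal.ofReal R ≤ ρ ω}
  have hempty : ∀ s ∈ Ioc 0 R, μ.restrict E {ω | ρ ω < ENNReal.ofReal s} = 0 := by
    intro s hs
    rw [Measure.restrict_apply (measurableSet_lt hρ measurable_const)]
    convert measure_empty (μ := μ)
    refine disjoint_iff_inter_eq_empty.1 (disjoint_left.2 fun ω hω hωE => ?_)
    exact (hω.trans_le (ENNReal.ofReal_le_ofReal hs.2)).not_ge hωE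
  rw [lintegral_rpow_neg_eq_lintegral_meas_lt hρ hβ, ← Ioc_union_Ioi_eq_Ioi hR,
    lintegral_union measurableSet_Ioi Ioc_disjoint_Ioi_same,
    setLIntegral_congr_fun (g := 0) measurableSet_Ioc fun s hs => by simp [hempty s hs]]
  simp only [Pi.zero_apply, lintegral_zero, zero_add]
  gcongr
  exact Measure.restrict_le_self

theorem setLIntegral_rpow_neg_le_add [SFinite μ] (hρ : Measurable ρ) (hβ : 0 < β) {p : ℝ}
    (hβp : β < p) {A : ℝ≥0∞}
    (hA : ∀ s : ℝ, 0 < s → μ {ω | ρ ω < ENNReal.ofReal s} ≤ A * ENNReal.ofReal s ^ p)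
    (S : Set Ω) {R : ℝ} (hR : 0 < R) :
    ∫⁻ ω in S, ρ ω ^ (-β) ∂μ ≤
      ENNReal.ofReal (β / (p - β)) * (A * ENNReal.ofReal R ^ (p - β)) +
        μ S * ENNReal.ofReal R ^ (-β) := by
  have hpβ : 0 < p - β := sub_pos.2 hβp
  have hhead : ∫⁻ s in Ioc 0 R,
      μ.restrict S {ω | ρ ω < ENNReal.ofReal s} * ENNReal.ofReal s ^ (-β - 1) ≤
        A * (ENNReal.ofReal R ^ (p - β) / ENNReal.ofReal (p - β)) := by
    rw [← lintegral_Ioc_rpow_sub_one hpβ hR, ← lintegral_const_mul _ (by fun_prop)]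
    refine setLIntegral_mono' measurableSet_Ioc fun s hs => ?_
    calc μ.restrict S {ω | ρ ω < ENNReal.ofReal s} * ENNReal.ofReal s ^ (-β - 1)
        ≤ A * ENNReal.ofReal s ^ p * ENNReal.ofReal s ^ (-β - 1) := by
          gcongr
          exact (Measure.restrict_apply_le _ _).trans (hA s hs.1)
      _ = A * ENNReal.ofReal s ^ (p - β - 1) := by
          rw [mul_assoc, ← ENNReal.rpow_add _ _ (by simpa using hs.1) ENNReal.ofReal_ne_top]
          ring_nf
  have htail : ∫⁻ s in Ioi R,
      μ.restrict S {ω | ρ ω < ENNReal.ofReal s} * ENNReal.ofReal s ^ (-β - 1) ≤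
        μ S * (ENNReal.ofReal R ^ (-β) / ENNReal.ofReal β) := by
    rw [← lintegral_Ioi_rpow_neg_sub_one hβ hR, ← lintegral_const_mul _ (by fun_prop)]
    refine lintegral_mono fun s => mul_le_mul_left ?_ _
    exact (measure_mono (subset_univ _)).trans_eq (Measure.restrict_apply_univ S)
  calc ∫⁻ ω in S, ρ ω ^ (-β) ∂μ
      ≤ ENNReal.ofReal β * (A * (ENNReal.ofReal R ^ (p - β) / ENNReal.ofReal (p - β)) +
          μ S * (ENNReal.ofReal R ^ (-β) / ENNReal.ofReal β)) := by
        rw [lintegral_rpow_neg_eq_lintegral_meas_lt hρ hβ, ← Ioc_union_Ioi_eq_Ioi hR.le]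
        gcongr
        exact (lintegral_union_le _ _ _).trans (add_le_add hhead htail)
    _ = _ := by
        rw [mul_add, mul_left_comm _ (μ S), ENNReal.mul_div_cancel (by simpa using hβ)
          ENNReal.ofReal_ne_top, ENNReal.ofReal_div_of_pos hpβ]
        simp only [div_eq_mul_inv]
        ring

theorem setLIntegral_rpow_neg_le [SFinite μ] (hρ : Measurable ρ) (hβ : 0 < β) {p : ℝ}
    (hβp : β < p) {A : ℝ≥0∞} (hA0 : A ≠ 0)
    (hA : ∀ s : ℝ, 0 < s → μ {ω | ρ ω < ENNReal.ofReal s} ≤ A * ENNReal.ofReal s ^ p)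
    (S : Set Ω) :
    ∫⁻ ω in S, ρ ω ^ (-β) ∂μ ≤
      ENNReal.ofReal (p / (p - β)) * A ^ (β / p) * μ S ^ (1 - β / p) := by
  have hp : 0 < p := hβ.trans hβp
  have hpβ : 0 < p - β := sub_pos.2 hβp
  have hexp : 0 < 1 - β / p := sub_pos.2 ((div_lt_one hp).2 hβp)
  have hconst : ENNReal.ofReal (p / (p - β)) ≠ 0 := by simpa using div_pos hp hpβ
  rcases eq_or_ne (μ S) 0 with hS0 | hS0
  · simp [Measure.restrict_eq_zero.2 hS0]
  have hM : μ S ^ (1 - β / p) ≠ 0 := by simp [ENNReal.rpow_eq_zero_iff, hS0, hexp.not_gt]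
  rcases eq_or_ne A ∞ with rfl | hAt
  · simp [hβ, hp, hconst, hM]
  rcases eq_or_ne (μ S) ∞ with hSt | hSt
  · have hAβ : A ^ (β / p) ≠ 0 := by
      simp [ENNReal.rpow_eq_zero_iff, hA0, hAt]
    simp [hSt, hexp, ENNReal.mul_top (mul_ne_zero hconst hAβ)]
  obtain ⟨R, hR, hhead, htail⟩ := exists_balancing_radius (β := β) hp hA0 hAt hS0 hSt
  calc ∫⁻ ω in S, ρ ω ^ (-β) ∂μ
      ≤ ENNReal.ofReal (β / (p - β)) * (A * ENNReal.ofReal R ^ (p - β)) +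
          μ S * ENNReal.ofReal R ^ (-β) := setLIntegral_rpow_neg_le_add hρ hβ hβp hA S hR
    _ = ENNReal.ofReal (β / (p - β) + 1) * (A ^ (β / p) * μ S ^ (1 - β / p)) := by
        rw [hhead, htail, ENNReal.ofReal_add (div_nonneg hβ.le hpβ.le) zero_le_one,
          ENNReal.ofReal_one, add_mul, one_mul]
    _ = ENNReal.ofReal (p / (p - β)) * A ^ (β / p) * μ S ^ (1 - β / p) := by
        rw [div_add_one hpβ.ne', add_sub_cancel, mul_assoc]

end NegativeMoments

section RieszPotential

variable {X : Type*} [PseudoMetricSpace X] [MeasurableSpace X]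

/-- The Riesz potential of `f` with respect to `σ`, with kernel exponent `β`. For `σ` Lebesgue
measure on `ℝⁿ` and `f` replaced by `|f|` it is the fractional integral of order `α = n - β`. -/
noncomputable def rieszPotential (σ : Measure X) (β : ℝ) (f : X → ℝ≥0∞) (x : X) : ℝ≥0∞ :=
  ∫⁻ y, f y * edist x y ^ (-β) ∂σ

theorem rieszPotential_restrict_add_compl (σ : Measure X) (β : ℝ) (f : X → ℝ≥0∞) {B : Set X}
    (hB : MeasurableSet B) (x : X) :
    rieszPotential (σ.restrict B) β f x + rieszPotential (σ.restrict Bᶜ) β f x =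
      rieszPotential σ β f x :=
  lintegral_add_compl _ hB

variable [BorelSpace X] {f : X → ℝ≥0∞} {β : ℝ}

theorem rieszPotential_restrict_compl_ball_le {σ : Measure X} [SFinite σ] (hf : Measurable f)
    (hβ : 0 < β) {a x : X} {r : ℝ} (hx : x ∈ ball a r) :
    rieszPotential (σ.restrict (ball a (2 * r))ᶜ) β f x ≤ 2 ^ β * ENNReal.ofReal β *
      ∫⁻ s in Ioi r, (∫⁻ y in ball a s, f y ∂σ) * ENNReal.ofReal s ^ (-β - 1) := by
  have hr : 0 < r := pos_of_mem_ball hx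
  have hρ : Measurable fun y => edist y a := by fun_prop
  have hcompl : (ball a (2 * r))ᶜ = {y | ENNReal.ofReal (2 * r) ≤ edist y a} := by
    ext y
    rw [mem_compl_iff, mem_ball, mem_ofPred_eq, ← edist_lt_ofReal, not_lt]
  have hkernel : ∀ y ∈ (ball a (2 * r))ᶜ, edist x y ^ (-β) ≤ 2 ^ β * edist y a ^ (-β) := by
    intro y hy
    have hdist : dist y a ≤ 2 * dist x y := by
      have hy' : 2 * r ≤ dist y a := not_lt.1 hy
      have hx' : dist x a < r := hx
      have htri := dist_triangle_left y a x
      linarith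
    have hedist : edist y a ≤ 2 * edist x y := by
      rw [edist_dist, edist_dist, ← ENNReal.ofReal_ofNat 2, ← ENNReal.ofReal_mul zero_le_two]
      exact ENNReal.ofReal_le_ofReal hdist
    have hinv := ENNReal.inv_le_inv.2 (ENNReal.rpow_le_rpow hedist hβ.le)
    rw [ENNReal.mul_rpow_of_nonneg _ _ hβ.le, ENNReal.mul_inv (by simp) (by simp)] at hinv
    rw [ENNReal.rpow_neg, ENNReal.rpow_neg]
    exact (ENNReal.inv_mul_le_iff (by simp) (by simp)).1 hinv
  calc rieszPotential (σ.restrict (ball a (2 * r))ᶜ) β f x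
      ≤ ∫⁻ y in (ball a (2 * r))ᶜ, 2 ^ β * (f y * edist y a ^ (-β)) ∂σ := by
        refine setLIntegral_mono' measurableSet_ball.compl fun y hy => ?_
        rw [mul_left_comm]
        exact mul_le_mul_right (hkernel y hy) _
    _ = 2 ^ β * ∫⁻ y in {y | ENNReal.ofReal (2 * r) ≤ edist y a},
          edist y a ^ (-β) ∂σ.withDensity f := by
        rw [lintegral_const_mul' _ _ (by simp), hcompl,
          setLIntegral_withDensity_eq_setLIntegral_mul _ hf (by fun_prop)
            (measurableSet_le measurable_const hρ)]
        rfl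
    _ ≤ 2 ^ β * (ENNReal.ofReal β * ∫⁻ s in Ioi (2 * r),
          σ.withDensity f {y | edist y a < ENNReal.ofReal s} * ENNReal.ofReal s ^ (-β - 1)) := by
        gcongr
        exact setLIntegral_rpow_neg_le_lintegral_Ioi hρ hβ (by positivity)
    _ ≤ 2 ^ β * ENNReal.ofReal β *
          ∫⁻ s in Ioi r, (∫⁻ y in ball a s, f y ∂σ) * ENNReal.ofReal s ^ (-β - 1) := by
        simp only [edist_lt_ofReal, ← mul_assoc, withDensity_apply']
        gcongr
        · linarith
        · rfl

variable [SecondCountableTopology X]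

theorem measurable_rieszPotential (σ : Measure X) [SFinite σ] (hf : Measurable f) (β : ℝ) :
    Measurable (rieszPotential σ β f) := by
  have hkernel : Measurable fun p : X × X => f p.2 * edist p.1 p.2 ^ (-β) := by fun_prop
  exact hkernel.lintegral_prod_right'

theorem setLIntegral_rieszPotential_le {μ σ : Measure X} [SFinite μ] [SFinite σ]
    (hf : Measurable f) {d : ℝ} (hβ : 0 < β) (hβd : β < d) {A : X → ℝ≥0∞}
    (hAm : Measurable A)
    (hA : ∀ᵐ y ∂σ, A y ≠ 0 ∧
      ∀ s : ℝ, 0 < s → μ (ball y s) ≤ A y * ENNReal.ofReal s ^ d) (S : Set X) :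
    ∫⁻ x in S, rieszPotential σ β f x ∂μ ≤
      ENNReal.ofReal (d / (d - β)) * μ S ^ (1 - β / d) * ∫⁻ y, f y * A y ^ (β / d) ∂σ := by
  have hkernel : Measurable (Function.uncurry fun x y : X => f y * edist x y ^ (-β)) := by
    fun_prop
  calc ∫⁻ x in S, rieszPotential σ β f x ∂μ
      = ∫⁻ y, ∫⁻ x in S, f y * edist x y ^ (-β) ∂μ ∂σ :=
        lintegral_lintegral_swap hkernel.aemeasurable
    _ = ∫⁻ y, f y * ∫⁻ x in S, edist x y ^ (-β) ∂μ ∂σ :=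
        lintegral_congr fun y => lintegral_const_mul _ (by fun_prop)
    _ ≤ ∫⁻ y, ENNReal.ofReal (d / (d - β)) * μ S ^ (1 - β / d) * (f y * A y ^ (β / d)) ∂σ := by
        refine lintegral_mono_ae (hA.mono fun y ⟨hy0, hy⟩ => ?_)
        have hmoment := setLIntegral_rpow_neg_le (ρ := fun x => edist x y) (by fun_prop) hβ hβd
          hy0 (fun s hs => by simp only [edist_lt_ofReal]; exact hy s hs) S
        exact (mul_le_mul_right hmoment (f y)).trans_eq (by ring)
    _ = _ := lintegral_const_mul _ (by fun_prop)

end RieszPotential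

section AhlforsRegular

variable {X : Type*} [PseudoMetricSpace X] [MeasurableSpace X]

/-- Ahlfors `d`-regularity at all scales: balls of radius `r` have measure comparable to `r ^ d`,
uniformly in the centre. -/
def IsAhlforsRegular (ν : Measure X) (d : ℝ) : Prop :=
  ∃ c C : ℝ≥0, c ≠ 0 ∧ ∀ (x : X) (r : ℝ), 0 < r →
    c * ENNReal.ofReal r ^ d ≤ ν (ball x r) ∧ ν (ball x r) ≤ C * ENNReal.ofReal r ^ d

theorem IsAhlforsRegular.measure_ball_ne_zero {ν : Measure X} {d : ℝ}
    (hν : IsAhlforsRegular ν d) (x : X) {r : ℝ} (hr : 0 < r) : ν (ball x r) ≠ 0 := by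
  obtain ⟨c, C, hc, hball⟩ := hν
  refine ((ENNReal.mul_pos (by simpa using hc) ?_).trans_le (hball x r hr).1).ne'
  exact (ENNReal.rpow_pos (by simpa using hr) ENNReal.ofReal_ne_top).ne'

theorem IsAhlforsRegular.measure_ball_ne_top {ν : Measure X} {d : ℝ}
    (hν : IsAhlforsRegular ν d) (x : X) {r : ℝ} (hr : 0 < r) : ν (ball x r) ≠ ∞ := by
  obtain ⟨c, C, -, hball⟩ := hν
  have hr0 : ENNReal.ofReal r ≠ 0 := by simpa using hr
  exact ((hball x r hr).2.trans_lt (ENNReal.mul_lt_top ENNReal.coe_lt_top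
    (ENNReal.rpow_ne_top_of_ne_zero hr0 ENNReal.ofReal_ne_top).lt_top)).ne

theorem IsAhlforsRegular.isLocallyFiniteMeasure {ν : Measure X} {d : ℝ}
    (hν : IsAhlforsRegular ν d) : IsLocallyFiniteMeasure ν :=
  ⟨fun x => ⟨ball x 1, ball_mem_nhds x one_pos, (hν.measure_ball_ne_top x one_pos).lt_top⟩⟩

theorem isAhlforsRegular_addHaar {E : Type*} [NormedAddCommGroup E] [NormedSpace ℝ E]
    [FiniteDimensional ℝ E] [MeasurableSpace E] [BorelSpace E] (ν : Measure E)
    [ν.IsAddHaarMeasure] : IsAhlforsRegular ν (Module.finrank ℝ E) := by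
  have hunit : ν (ball 0 1) ≠ ∞ := measure_ball_lt_top.ne
  have hball : ∀ (x : E) (r : ℝ), 0 < r →
      ν (ball x r) = (ν (ball 0 1)).toNNReal * ENNReal.ofReal r ^ (Module.finrank ℝ E : ℝ) := by
    intro x r hr
    rw [Measure.addHaar_ball_of_pos ν x hr, ENNReal.coe_toNNReal hunit, ENNReal.rpow_natCast,
      ENNReal.ofReal_pow hr.le, mul_comm]
  exact ⟨_, _, ENNReal.toNNReal_ne_zero.2 ⟨(measure_ball_pos ν 0 one_pos).ne', hunit⟩,
    fun x r hr => ⟨(hball x r hr).ge, (hball x r hr).le⟩⟩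

end AhlforsRegular

section A1qWeight

variable {X : Type*} [PseudoMetricSpace X] [MeasurableSpace X]

/-- Weights of the Muckenhoupt–Wheeden class `A_{1,q}` on a metric measure space. Weights take
values in `ℝ≥0∞`, so being positive and finite almost everywhere is part of the definition. -/
structure IsA1qWeight (ν : Measure X) (q : ℝ) (w : X → ℝ≥0∞) : Prop where
  measurable : Measurable w
  ae_ne_zero : ∀ᵐ x ∂ν, w x ≠ 0
  ae_ne_top : ∀ᵐ x ∂ν, w x ≠ ∞
  exists_bound : ∃ C : ℝ≥0, ∀ (a : X) (r : ℝ), 0 < r →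
    (⨍⁻ x in ball a r, w x ^ q ∂ν) ^ (1 / q) *
      essSup (fun x => (w x)⁻¹) (ν.restrict (ball a r)) ≤ C

variable {ν : Measure X} {d q : ℝ} {w : X → ℝ≥0∞}

theorem IsA1qWeight.exists_setLIntegral_ball_le (hw : IsA1qWeight ν q w)
    (hν : IsAhlforsRegular ν d) (hq : 0 < q) :
    ∃ K : ℝ≥0, ∀ (a : X) (s : ℝ), 0 < s → ∀ᵐ y ∂ν.restrict (ball a s),
      ∫⁻ x in ball a s, w x ^ q ∂ν ≤ K * ENNReal.ofReal s ^ d * w y ^ q := by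
  obtain ⟨M, hM⟩ := hw.exists_bound
  obtain ⟨_, C, -, hball⟩ := id hν
  refine ⟨C * M ^ q, fun a s hs => ?_⟩
  filter_upwards [ENNReal.ae_le_essSup fun x => (w x)⁻¹, ae_restrict_of_ae hw.ae_ne_zero,
    ae_restrict_of_ae hw.ae_ne_top] with y hsup hy0 hyt
  have hroot : (⨍⁻ x in ball a s, w x ^ q ∂ν) ^ (1 / q) ≤ M * w y :=
    (ENNReal.mul_inv_le_iff hy0 hyt).1 ((mul_le_mul_right hsup _).trans (hM a s hs))
  have haverage : ⨍⁻ x in ball a s, w x ^ q ∂ν ≤ M ^ q * w y ^ q := by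
    rw [← ENNReal.mul_rpow_of_nonneg _ _ hq.le]
    rwa [one_div, ENNReal.rpow_inv_le_iff hq] at hroot
  calc ∫⁻ x in ball a s, w x ^ q ∂ν
      = ν (ball a s) * ⨍⁻ x in ball a s, w x ^ q ∂ν := by
        rw [setLAverage_eq, ENNReal.mul_div_cancel (hν.measure_ball_ne_zero a hs)
          (hν.measure_ball_ne_top a hs)]
    _ ≤ C * ENNReal.ofReal s ^ d * (M ^ q * w y ^ q) :=
        mul_le_mul' (hball a s hs).2 haverage
    _ = _ := by
        rw [ENNReal.coe_mul, ENNReal.coe_rpow_of_nonneg _ hq.le]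
        ring

theorem IsA1qWeight.withDensity_ball_ne_zero (hw : IsA1qWeight ν q w)
    (hν : IsAhlforsRegular ν d) (hq : 0 < q) (a : X) {s : ℝ} (hs : 0 < s) :
    ν.withDensity (fun x => w x ^ q) (ball a s) ≠ 0 := by
  have hm := hw.measurable
  have hac : ν ≪ ν.withDensity fun x => w x ^ q :=
    withDensity_absolutelyContinuous' (by fun_prop)
      (hw.ae_ne_zero.mono fun x hx => by simp [ENNReal.rpow_eq_zero_iff, hx, hq.not_gt])
  exact fun h => hν.measure_ball_ne_zero a hs (hac h)

/-- `MaximalBound ν μ d K u` says that the uncentred maximal function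
`y ↦ sup_{B(a,s) ∋ y} μ(B(a,s)) / s ^ d` is at most `K * u` almost everywhere for `ν`. -/
def MaximalBound (ν μ : Measure X) (d : ℝ) (K : ℝ≥0) (u : X → ℝ≥0∞) : Prop :=
  ∀ᵐ y ∂ν, ∀ (a : X) (s : ℝ), y ∈ ball a s → μ (ball a s) ≤ K * ENNReal.ofReal s ^ d * u y

variable [SecondCountableTopology X] [BorelSpace X]

theorem IsA1qWeight.exists_maximalBound (hw : IsA1qWeight ν q w)
    (hν : IsAhlforsRegular ν d) (hd : 0 < d) (hq : 0 < q) :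
    ∃ K : ℝ≥0, MaximalBound ν (ν.withDensity fun x => w x ^ q) d K fun x => w x ^ q := by
  obtain ⟨K, hK⟩ := hw.exists_setLIntegral_ball_le hν hq
  obtain ⟨D, hDcount, hDdense⟩ := TopologicalSpace.exists_countable_dense X
  have hcountable : ∀ᵐ y ∂ν, ∀ b ∈ D, ∀ t : ℚ, 0 < (t : ℝ) → y ∈ ball b (t : ℝ) →
      ∫⁻ x in ball b (t : ℝ), w x ^ q ∂ν ≤ K * ENNReal.ofReal t ^ d * w y ^ q := by
    refine (ae_ball_iff hDcount).2 fun b _ => ae_all_iff.2 fun t => ?_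
    rcases lt_or_ge 0 (t : ℝ) with ht | ht
    · filter_upwards [(ae_restrict_iff' measurableSet_ball).1 (hK b t ht)] with y hy _ using hy
    · exact .of_forall fun y ht' => absurd ht' ht.not_gt
  have hd0 := hd.le
  refine ⟨K * 3 ^ d, hcountable.mono fun y hy a s hys => ?_⟩
  have hs : 0 < s := pos_of_mem_ball hys
  obtain ⟨b, hb, hab⟩ := hDdense.exists_dist_lt a hs
  obtain ⟨t, h2t, ht3⟩ := exists_rat_btwn (show 2 * s < 3 * s by linarith)
  have hsub : ball a s ⊆ ball b (t : ℝ) := ball_subset_ball' (by linarith)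
  calc ν.withDensity (fun x => w x ^ q) (ball a s)
      ≤ ν.withDensity (fun x => w x ^ q) (ball b (t : ℝ)) := measure_mono hsub
    _ = ∫⁻ x in ball b (t : ℝ), w x ^ q ∂ν := withDensity_apply _ measurableSet_ball
    _ ≤ K * ENNReal.ofReal t ^ d * w y ^ q := hy b hb t (by linarith) (hsub hys)
    _ ≤ K * ENNReal.ofReal (3 * s) ^ d * w y ^ q := by gcongr
    _ = _ := by
        rw [ENNReal.ofReal_mul (by norm_num), ENNReal.mul_rpow_of_nonneg _ _ hd0,
          ENNReal.coe_mul, ENNReal.coe_rpow_of_nonneg _ hd0]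
        simp [mul_assoc]

theorem IsA1qWeight.withDensity_ball_ne_top (hw : IsA1qWeight ν q w)
    (hν : IsAhlforsRegular ν d) (hd : 0 < d) (hq : 0 < q) (a : X) (s : ℝ) :
    ν.withDensity (fun x => w x ^ q) (ball a s) ≠ ∞ := by
  rcases le_or_gt s 0 with hs | hs
  · simp [ball_eq_empty.2 hs]
  obtain ⟨K, hK⟩ := hw.exists_maximalBound hν hd hq
  have hfreq : ∃ᵐ y ∂ν, y ∈ ball a s :=
    frequently_ae_mem_iff.2 (hν.measure_ball_ne_zero a hs)
  obtain ⟨y, hys, hyK, hyt⟩ := (hfreq.and_eventually (hK.and hw.ae_ne_top)).exists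
  exact ((hyK a s hys).trans_lt (by finiteness)).ne

theorem IsA1qWeight.exists_withDensity_ball_four_mul_le (hw : IsA1qWeight ν q w)
    (hν : IsAhlforsRegular ν d) (hd : 0 < d) (hq : 0 < q) :
    ∃ D : ℝ≥0, ∀ (a : X) (r : ℝ), 0 < r →
      ν.withDensity (fun x => w x ^ q) (ball a (4 * r)) ≤
        D * ν.withDensity (fun x => w x ^ q) (ball a r) := by
  obtain ⟨K, hK⟩ := hw.exists_maximalBound hν hd hq
  obtain ⟨c, _, hc, hball⟩ := id hν
  refine ⟨c⁻¹ * (K * 4 ^ d), fun a r hr => ?_⟩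
  set μ := ν.withDensity fun x => w x ^ q with hμ
  have hm := hw.measurable
  have hrd : ENNReal.ofReal r ^ d ≠ 0 := (ENNReal.rpow_pos (by simpa) (by simp)).ne'
  have hrd' : ENNReal.ofReal r ^ d ≠ ∞ := by finiteness
  have hscaled : ENNReal.ofReal r ^ d * (c * μ (ball a (4 * r))) ≤
      ENNReal.ofReal r ^ d * (K * 4 ^ d * μ (ball a r)) :=
    calc ENNReal.ofReal r ^ d * (c * μ (ball a (4 * r)))
        = c * ENNReal.ofReal r ^ d * μ (ball a (4 * r)) := by ring
      _ ≤ ν (ball a r) * μ (ball a (4 * r)) := by gcongr; exact (hball a r hr).1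
      _ = ∫⁻ _ in ball a r, μ (ball a (4 * r)) ∂ν := by rw [setLIntegral_const, mul_comm]
      _ ≤ ∫⁻ y in ball a r, K * ENNReal.ofReal (4 * r) ^ d * w y ^ q ∂ν := by
          refine setLIntegral_mono_ae' measurableSet_ball (hK.mono fun y hy hyr => hy _ _ ?_)
          exact ball_subset_ball (by linarith) hyr
      _ = K * ENNReal.ofReal (4 * r) ^ d * μ (ball a r) := by
          rw [lintegral_const_mul _ (by fun_prop), hμ, withDensity_apply _ measurableSet_ball]
      _ = _ := by
          rw [ENNReal.ofReal_mul (by norm_num), ENNReal.mul_rpow_of_nonneg _ _ hd.le,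
            ENNReal.ofReal_ofNat]
          ring
  have hc0 : (c : ℝ≥0∞) ≠ 0 := by simpa using hc
  have := (ENNReal.mul_le_mul_iff_right hrd hrd').1 hscaled
  rw [ENNReal.coe_mul, ENNReal.coe_inv hc, ENNReal.coe_mul, ENNReal.coe_rpow_of_nonneg _ hd.le,
    mul_assoc, ← ENNReal.mul_le_iff_le_inv hc0 ENNReal.coe_ne_top]
  exact this

end A1qWeight

section WeakTypeEstimate

theorem le_lintegral_Ioi_of_doubling {V F : ℝ → ℝ≥0∞} (hV : Monotone V) (hF : Monotone F)
    {θ r : ℝ} (hθ : 0 ≤ θ) (hr : 0 < r) {D : ℝ≥0∞} (hdouble : V (4 * r) ≤ D * V r)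
    (hV0 : V (4 * r) ≠ 0) (hVt : V (4 * r) ≠ ∞) :
    F (2 * r) ≤ 2 * D ^ θ * V r ^ θ *
      ∫⁻ s in Ioi r, V s ^ (-θ) * F s * ENNReal.ofReal s⁻¹ := by
  have hlength : (2 : ℝ≥0∞)⁻¹ = ENNReal.ofReal (4 * r)⁻¹ * volume (Ioc (2 * r) (4 * r)) := by
    rw [Real.volume_Ioc, ← ENNReal.ofReal_mul (by positivity),
      show (4 * r)⁻¹ * (4 * r - 2 * r) = 2⁻¹ by field_simp; norm_num,
      ENNReal.ofReal_inv_of_pos two_pos, ENNReal.ofReal_ofNat]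
  have hlower : V (4 * r) ^ (-θ) * F (2 * r) * 2⁻¹ ≤
      ∫⁻ s in Ioi r, V s ^ (-θ) * F s * ENNReal.ofReal s⁻¹ :=
    calc V (4 * r) ^ (-θ) * F (2 * r) * 2⁻¹
        = ∫⁻ _ in Ioc (2 * r) (4 * r),
            V (4 * r) ^ (-θ) * F (2 * r) * ENNReal.ofReal (4 * r)⁻¹ := by
          rw [setLIntegral_const, hlength, mul_assoc _ (ENNReal.ofReal _)]
      _ ≤ ∫⁻ s in Ioc (2 * r) (4 * r), V s ^ (-θ) * F s * ENNReal.ofReal s⁻¹ := by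
          refine setLIntegral_mono' measurableSet_Ioc fun s ⟨h2s, hs4⟩ => ?_
          have hs : 0 < s := by linarith
          rw [ENNReal.rpow_neg, ENNReal.rpow_neg]
          gcongr
          · exact hV hs4
          · exact hF h2s.le
      _ ≤ _ := lintegral_mono_set fun s hs => mem_Ioi.2 (by linarith [hs.1])
  have hVθ : V (4 * r) ^ θ * V (4 * r) ^ (-θ) = 1 := by
    rw [← ENNReal.rpow_add _ _ hV0 hVt, add_neg_cancel, ENNReal.rpow_zero]
  calc F (2 * r) = V (4 * r) ^ θ * V (4 * r) ^ (-θ) * F (2 * r) * (2 * 2⁻¹) := by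
        rw [hVθ, ENNReal.mul_inv_cancel two_ne_zero ENNReal.ofNat_ne_top, one_mul, mul_one]
    _ = 2 * V (4 * r) ^ θ * (V (4 * r) ^ (-θ) * F (2 * r) * 2⁻¹) := by ring
    _ ≤ 2 * (D * V r) ^ θ * ∫⁻ s in Ioi r, V s ^ (-θ) * F s * ENNReal.ofReal s⁻¹ := by gcongr
    _ = _ := by rw [ENNReal.mul_rpow_of_nonneg _ _ hθ, ← mul_assoc 2]

theorem mul_rpow_le_add_of_mul_le {γ m A B : ℝ≥0∞} {θ : ℝ} (hθ : 0 < θ) (hm : m ≠ ∞)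
    (h : γ * m ≤ A * m ^ (1 - θ) + B * m) : γ * m ^ θ ≤ A + B * m ^ θ := by
  rcases eq_or_ne m 0 with rfl | hm0
  · simp [hθ]
  have hθ0 : m ^ (1 - θ) ≠ 0 := (ENNReal.rpow_pos (pos_iff_ne_zero.2 hm0) hm).ne'
  have hsplit : m = m ^ θ * m ^ (1 - θ) := by
    rw [← ENNReal.rpow_add _ _ hm0 hm, add_sub_cancel, ENNReal.rpow_one]
  refine (ENNReal.mul_le_mul_iff_left hθ0 (ENNReal.rpow_ne_top_of_ne_zero hm0 hm)).1 ?_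
  rwa [add_mul, mul_assoc, mul_assoc, ← hsplit]

variable {X : Type*} [PseudoMetricSpace X] [MeasurableSpace X]
  {ν μ : Measure X} {w f : X → ℝ≥0∞} {d q r : ℝ} {K : ℝ≥0} {a : X}

theorem rpow_measure_ball_le_of_maximalBound (hq : 0 < q) {s : ℝ} {y : X}
    (hK : μ (ball a s) ≤ K * ENNReal.ofReal s ^ d * w y ^ q) :
    μ (ball a s) ^ (1 / q) ≤ K ^ (1 / q) * ENNReal.ofReal s ^ (d / q) * w y := by
  have hq' : 0 ≤ 1 / q := by positivity
  refine (ENNReal.rpow_le_rpow hK hq').trans_eq ?_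
  rw [ENNReal.mul_rpow_of_nonneg _ _ hq', ENNReal.mul_rpow_of_nonneg _ _ hq', ← ENNReal.rpow_mul,
    ← ENNReal.rpow_mul, mul_one_div, mul_one_div_cancel hq.ne', ENNReal.rpow_one]

/-- The integral `∫_r^∞ μ(B(a,s))^{-1/q} ‖f‖_{L^{1,w}(B(a,s))} ds/s` controlling a potential of `f`
on `B(a,r)`. -/
noncomputable def localTail (ν μ : Measure X) (q : ℝ) (w f : X → ℝ≥0∞) (a : X) (r : ℝ) : ℝ≥0∞ :=
  ∫⁻ s in Ioi r,
    μ (ball a s) ^ (-(1 / q)) * (∫⁻ y in ball a s, f y * w y ∂ν) * ENNReal.ofReal s⁻¹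

variable [BorelSpace X]

theorem setLIntegral_ball_le_of_maximalBound (hq : 0 < q)
    (hK : MaximalBound ν μ d K fun x => w x ^ q) {s : ℝ} (hs : 0 < s)
    (hμ0 : μ (ball a s) ≠ 0) (hμt : μ (ball a s) ≠ ∞) :
    ∫⁻ y in ball a s, f y ∂ν ≤ K ^ (1 / q) * ENNReal.ofReal s ^ (d / q) *
      (μ (ball a s) ^ (-(1 / q)) * ∫⁻ y in ball a s, f y * w y ∂ν) := by
  have hμθ : μ (ball a s) ^ (-(1 / q)) * μ (ball a s) ^ (1 / q) = 1 := by
    rw [← ENNReal.rpow_add _ _ hμ0 hμt, neg_add_cancel, ENNReal.rpow_zero]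
  have hpoint : ∀ᵐ y ∂ν.restrict (ball a s), f y ≤
      K ^ (1 / q) * ENNReal.ofReal s ^ (d / q) * μ (ball a s) ^ (-(1 / q)) * (f y * w y) := by
    filter_upwards [ae_restrict_of_ae hK, ae_restrict_mem measurableSet_ball] with y hy hys
    calc f y = μ (ball a s) ^ (-(1 / q)) * f y * μ (ball a s) ^ (1 / q) := by
          rw [mul_right_comm, hμθ, one_mul]
      _ ≤ μ (ball a s) ^ (-(1 / q)) * f y *
            (K ^ (1 / q) * ENNReal.ofReal s ^ (d / q) * w y) := by
          gcongr
          exact rpow_measure_ball_le_of_maximalBound hq (hy a s hys)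
      _ = _ := by ring
  refine (lintegral_mono_ae hpoint).trans_eq ?_
  rw [lintegral_const_mul' _ _ ?_, mul_assoc]
  have hsd : ENNReal.ofReal s ^ (d / q) ≠ ∞ :=
    ENNReal.rpow_ne_top_of_ne_zero (by simpa using hs) ENNReal.ofReal_ne_top
  finiteness

theorem rieszPotential_restrict_compl_ball_le_of_maximalBound [SFinite ν] (hf : Measurable f)
    (hd : 0 < d) (hq : 0 < q)
    (hK : MaximalBound ν μ d K fun x => w x ^ q)
    (hμ0 : ∀ s, 0 < s → μ (ball a s) ≠ 0) (hμt : ∀ s, μ (ball a s) ≠ ∞) {x : X}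
    (hx : x ∈ ball a r) :
    rieszPotential (ν.restrict (ball a (2 * r))ᶜ) (d / q) f x ≤
      2 ^ (d / q) * ENNReal.ofReal (d / q) * K ^ (1 / q) * localTail ν μ q w f a r := by
  have hKq : (K : ℝ≥0∞) ^ (1 / q) ≠ ∞ := by finiteness
  refine (rieszPotential_restrict_compl_ball_le hf (div_pos hd hq) hx).trans ?_
  rw [localTail, mul_assoc _ (_ ^ (1 / q)), ← lintegral_const_mul' _ _ hKq]
  refine mul_le_mul_right (setLIntegral_mono' measurableSet_Ioi fun s hs => ?_) _
  have hs0 : 0 < s := (pos_of_mem_ball hx).trans hs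
  have hpow : ENNReal.ofReal s ^ (d / q) * ENNReal.ofReal s ^ (-(d / q) - 1) =
      ENNReal.ofReal s⁻¹ := by
    rw [← ENNReal.rpow_add _ _ (by simpa using hs0) ENNReal.ofReal_ne_top,
      show d / q + (-(d / q) - 1) = -1 by ring, ENNReal.rpow_neg_one, ENNReal.ofReal_inv_of_pos hs0]
  calc _ ≤ K ^ (1 / q) * ENNReal.ofReal s ^ (d / q) *
          (μ (ball a s) ^ (-(1 / q)) * ∫⁻ y in ball a s, f y * w y ∂ν) *
            ENNReal.ofReal s ^ (-(d / q) - 1) := by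
        gcongr
        exact setLIntegral_ball_le_of_maximalBound hq hK hs0 (hμ0 s hs0) (hμt s)
    _ = _ := by
        rw [← hpow]
        ring

variable [SecondCountableTopology X]

theorem setLIntegral_rieszPotential_le_of_maximalBound [SFinite ν] [SFinite μ]
    (hf : Measurable f) (hw : Measurable w) (hd : 0 < d) (hq : 1 < q)
    (hK : MaximalBound ν μ d K fun x => w x ^ q)
    (hμ0 : ∀ y s, 0 < s → μ (ball y s) ≠ 0) (B S : Set X) :
    ∫⁻ x in S, rieszPotential (ν.restrict B) (d / q) f x ∂μ ≤
      ENNReal.ofReal (d / (d - d / q)) * K ^ (1 / q) * (∫⁻ y in B, f y * w y ∂ν) *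
        μ S ^ (1 - 1 / q) := by
  have hq0 : 0 < q := one_pos.trans hq
  have hexp : d / q / d = 1 / q := by field_simp
  have hgrowth : ∀ᵐ y ∂ν.restrict B, K * w y ^ q ≠ 0 ∧
      ∀ s : ℝ, 0 < s → μ (ball y s) ≤ K * w y ^ q * ENNReal.ofReal s ^ d := by
    refine ae_restrict_of_ae (hK.mono fun y hy => ?_)
    have hball : ∀ s : ℝ, 0 < s → μ (ball y s) ≤ K * w y ^ q * ENNReal.ofReal s ^ d :=
      fun s hs => (hy y s (mem_ball_self hs)).trans_eq (by ring)
    refine ⟨fun h => hμ0 y 1 one_pos ?_, hball⟩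
    simpa [h] using hball 1 one_pos
  have hroot : ∀ y, f y * (K * w y ^ q) ^ (1 / q) = K ^ (1 / q) * (f y * w y) := by
    intro y
    rw [ENNReal.mul_rpow_of_nonneg _ _ (by positivity), ← ENNReal.rpow_mul,
      mul_one_div_cancel hq0.ne', ENNReal.rpow_one, mul_left_comm]
  refine (setLIntegral_rieszPotential_le hf (div_pos hd hq0) (div_lt_self hd hq) (by fun_prop)
    hgrowth S).trans_eq ?_
  simp only [hexp, hroot]
  rw [lintegral_const_mul _ (by fun_prop)]
  ring

theorem mul_measure_lt_rieszPotential_le_of_maximalBound [SFinite ν] [SFinite μ]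
    (hf : Measurable f) (hw : Measurable w) (hd : 0 < d) (hq : 1 < q)
    (hK : MaximalBound ν μ d K fun x => w x ^ q)
    (hμ0 : ∀ y s, 0 < s → μ (ball y s) ≠ 0) (hμt : ∀ s, μ (ball a s) ≠ ∞) (γ : ℝ≥0∞) :
    γ * μ {x | x ∈ ball a r ∧ γ < rieszPotential ν (d / q) f x} ≤
      ENNReal.ofReal (d / (d - d / q)) * K ^ (1 / q) * (∫⁻ y in ball a (2 * r), f y * w y ∂ν) *
        μ {x | x ∈ ball a r ∧ γ < rieszPotential ν (d / q) f x} ^ (1 - 1 / q) +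
      2 ^ (d / q) * ENNReal.ofReal (d / q) * K ^ (1 / q) * localTail ν μ q w f a r *
        μ {x | x ∈ ball a r ∧ γ < rieszPotential ν (d / q) f x} := by
  set S := {x | x ∈ ball a r ∧ γ < rieszPotential ν (d / q) f x}
  have hS : MeasurableSet S :=
    measurableSet_ball.inter (measurableSet_lt measurable_const (measurable_rieszPotential ν hf _))
  calc γ * μ S = ∫⁻ _ in S, γ ∂μ := (setLIntegral_const S γ).symm
    _ ≤ ∫⁻ x in S, rieszPotential ν (d / q) f x ∂μ :=
        setLIntegral_mono' hS fun x hx => hx.2.le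
    _ = ∫⁻ x in S, rieszPotential (ν.restrict (ball a (2 * r))) (d / q) f x ∂μ +
          ∫⁻ x in S, rieszPotential (ν.restrict (ball a (2 * r))ᶜ) (d / q) f x ∂μ := by
        rw [← lintegral_add_left (measurable_rieszPotential _ hf _)]
        simp only [rieszPotential_restrict_add_compl _ _ _ measurableSet_ball]
    _ ≤ _ := by
        refine add_le_add (setLIntegral_rieszPotential_le_of_maximalBound hf hw hd hq hK hμ0 _ S)
          ((setLIntegral_mono' hS fun x hx => ?_).trans_eq (setLIntegral_const S _))
        exact rieszPotential_restrict_compl_ball_le_of_maximalBound hf hd (one_pos.trans hq) hK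
          (hμ0 a) hμt hx.1

theorem mul_measure_lt_rieszPotential_rpow_le_of_maximalBound [SFinite ν] [SFinite μ]
    (hf : Measurable f) (hw : Measurable w) (hd : 0 < d) (hq : 1 < q) (hr : 0 < r)
    (hK : MaximalBound ν μ d K fun x => w x ^ q)
    (hμ0 : ∀ y s, 0 < s → μ (ball y s) ≠ 0) (hμt : ∀ s, μ (ball a s) ≠ ∞) {D : ℝ≥0}
    (hD : μ (ball a (4 * r)) ≤ D * μ (ball a r)) (γ : ℝ≥0∞) :
    γ * μ {x | x ∈ ball a r ∧ γ < rieszPotential ν (d / q) f x} ^ (1 / q) ≤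
      (ENNReal.ofReal (d / (d - d / q)) * K ^ (1 / q) * (2 * D ^ (1 / q)) +
        2 ^ (d / q) * ENNReal.ofReal (d / q) * K ^ (1 / q)) *
        μ (ball a r) ^ (1 / q) * localTail ν μ q w f a r := by
  have hθ : 0 < 1 / q := by positivity
  set c₁ := ENNReal.ofReal (d / (d - d / q)) * K ^ (1 / q)
  set c₂ := 2 ^ (d / q) * ENNReal.ofReal (d / q) * K ^ (1 / q)
  set S := {x | x ∈ ball a r ∧ γ < rieszPotential ν (d / q) f x}
  have hSr : μ S ≤ μ (ball a r) := measure_mono fun x hx => hx.1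
  have hnear : ∫⁻ y in ball a (2 * r), f y * w y ∂ν ≤
      2 * D ^ (1 / q) * μ (ball a r) ^ (1 / q) * localTail ν μ q w f a r :=
    le_lintegral_Ioi_of_doubling (V := fun s => μ (ball a s))
      (F := fun s => ∫⁻ y in ball a s, f y * w y ∂ν)
      (fun _ _ h => measure_mono (ball_subset_ball h))
      (fun _ _ h => lintegral_mono_set (ball_subset_ball h)) hθ.le hr hD
      (hμ0 a _ (by positivity)) (hμt _)
  calc γ * μ S ^ (1 / q)
      ≤ c₁ * (∫⁻ y in ball a (2 * r), f y * w y ∂ν) +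
          c₂ * localTail ν μ q w f a r * μ S ^ (1 / q) :=
        mul_rpow_le_add_of_mul_le hθ (ne_top_of_le_ne_top (hμt r) hSr)
          (mul_measure_lt_rieszPotential_le_of_maximalBound hf hw hd hq hK hμ0 hμt γ)
    _ ≤ c₁ * (2 * D ^ (1 / q) * μ (ball a r) ^ (1 / q) * localTail ν μ q w f a r) +
          c₂ * localTail ν μ q w f a r * μ (ball a r) ^ (1 / q) := by gcongr
    _ = (c₁ * (2 * D ^ (1 / q)) + c₂) * μ (ball a r) ^ (1 / q) * localTail ν μ q w f a r := by
        ring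

theorem statement13_general (hν : IsAhlforsRegular ν d) (hd : 0 < d) (hq : 1 < q)
    (hw : IsA1qWeight ν q w) :
    ∃ C : ℝ, 0 < C ∧ ∀ (a : X) (r : ℝ) (f : X → ℝ≥0∞), 0 < r → Measurable f → ∀ γ : ℝ≥0∞,
      γ * ν.withDensity (fun x => w x ^ q)
          {x | x ∈ ball a r ∧ γ < rieszPotential ν (d / q) f x} ^ (1 / q) ≤
        ENNReal.ofReal C * ν.withDensity (fun x => w x ^ q) (ball a r) ^ (1 / q) *
          localTail ν (ν.withDensity fun x => w x ^ q) q w f a r := by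
  have hq0 : 0 < q := one_pos.trans hq
  have := hν.isLocallyFiniteMeasure
  obtain ⟨K, hK⟩ := hw.exists_maximalBound hν hd hq0
  obtain ⟨D, hD⟩ := hw.exists_withDensity_ball_four_mul_le hν hd hq0
  obtain ⟨C, hC⟩ : ∃ C, C = ENNReal.ofReal (d / (d - d / q)) * K ^ (1 / q) * (2 * D ^ (1 / q)) +
    2 ^ (d / q) * ENNReal.ofReal (d / q) * K ^ (1 / q) := ⟨_, rfl⟩
  have hCt : C ≠ ∞ := by rw [hC]; finiteness
  refine ⟨C.toReal + 1, by positivity, fun a r f hr hf γ => ?_⟩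
  refine (mul_measure_lt_rieszPotential_rpow_le_of_maximalBound hf hw.measurable hd hq hr hK
    (fun a _ hs => hw.withDensity_ball_ne_zero hν hq0 a hs)
    (hw.withDensity_ball_ne_top hν hd hq0 a) (hD a r hr) γ).trans ?_
  rw [← hC]
  gcongr
  exact (ENNReal.le_ofReal_iff_toReal_le hCt (by positivity)).2 (by linarith)

end WeakTypeEstimate

section Euclidean

variable {n : ℕ} {q : ℝ} {w : EuclideanSpace ℝ (Fin n) → ℝ}

theorem wSet_rpow_eq_withDensity (hw : ∀ x, 0 ≤ w x) (hq : 0 ≤ q)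
    (E : Set (EuclideanSpace ℝ (Fin n))) :
    wSet (fun x => w x ^ q) E = volume.withDensity (fun x => ENNReal.ofReal (w x) ^ q) E := by
  simp only [wSet, withDensity_apply', ENNReal.ofReal_rpow_of_nonneg (hw _) hq]

theorem wLp_one (w f : EuclideanSpace ℝ (Fin n) → ℝ) (Ω : Set (EuclideanSpace ℝ (Fin n))) :
    wLp 1 w f Ω = ∫⁻ x in Ω, ENNReal.ofReal |f x| * ENNReal.ofReal (w x) := by
  simp only [wLp, ENNReal.rpow_one, div_one]

theorem fracIntE_eq_rieszPotential {α : ℝ} (hα : α ≤ n) (f : EuclideanSpace ℝ (Fin n) → ℝ) :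
    fracIntE α f = rieszPotential volume (n - α) fun y => ENNReal.ofReal |f y| := by
  ext x
  refine lintegral_congr fun y => ?_
  rw [ENNReal.rpow_neg, edist_dist, ENNReal.ofReal_rpow_of_nonneg dist_nonneg (sub_nonneg.2 hα),
    div_eq_mul_inv]

theorem isA1qWeight_of_muckA1q (hw : IsWeight w) (hq : 0 ≤ q) (hA : MuckA1q q w) :
    IsA1qWeight volume q fun x => ENNReal.ofReal (w x) := by
  obtain ⟨hmeas, hnonneg, -, hpos⟩ := hw
  obtain ⟨C, -, hC⟩ := hA
  refine ⟨by fun_prop, hpos.mono fun x hx => by simpa using hx,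
    .of_forall fun x => ENNReal.ofReal_ne_top, C.toNNReal, fun a r hr => ?_⟩
  have hinv : (fun x => (ENNReal.ofReal (w x))⁻¹) =ᵐ[volume.restrict (ball a r)]
      fun x => ENNReal.ofReal (w x)⁻¹ :=
    ae_restrict_of_ae (hpos.mono fun x hx => (ENNReal.ofReal_inv_of_pos hx).symm)
  rw [essSup_congr_ae hinv, setLAverage_eq, ENNReal.div_eq_inv_mul]
  simp only [ENNReal.ofReal_rpow_of_nonneg (hnonneg _) hq]
  exact hC a r hr

end Euclidean

/-- Let `0 < α < n`, `1/q = 1 − α/n`, `w ∈ A_{1,q}`. Then there is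
`C > 0`, independent of `f`, `a`, `r`, such that for every `a ∈ ℝⁿ`, `r > 0` and
`f ∈ L^{1,w}_loc`:
`‖I_α f‖_{WL^{q,w^q}(B(a,r))} ≤ C·w^q(B(a,r))^{1/q}·∫_r^∞ w^q(B(a,s))^{-1/q}‖f‖_{L^{1,w}(B(a,s))} ds/s`. -/
theorem statement13 {n : ℕ} (α q : ℝ) (hα : 0 < α) (hαn : α < n)
    (hq : 1 / q = 1 - α / n)
    (w : EuclideanSpace ℝ (Fin n) → ℝ) (hw : IsWeight w) (hA1q : MuckA1q q w) :
    ∃ C : ℝ, 0 < C ∧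
      ∀ (a : EuclideanSpace ℝ (Fin n)) (r : ℝ) (f : EuclideanSpace ℝ (Fin n) → ℝ),
        0 < r → MemLocWLp 1 w f →
        wWeakLpE q (fun x => w x ^ q) (fracIntE α f) (ball a r) ≤
          ENNReal.ofReal C * wSet (fun x => w x ^ q) (ball a r) ^ (1 / q) *
            ∫⁻ s in Set.Ioi r,
              wSet (fun x => w x ^ q) (ball a s) ^ (-(1 / q)) *
                wLp 1 w f (ball a s) * ENNReal.ofReal s⁻¹ := by
  have hn : (0 : ℝ) < n := hα.trans hαn
  have hq_inv : 1 / q < 1 := by rw [hq]; linarith [div_pos hα hn]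
  have hq_pos : 0 < q := one_div_pos.1 (by rw [hq]; linarith [(div_lt_one hn).2 hαn])
  have hexp : (n : ℝ) / q = n - α := by rw [div_eq_mul_one_div, hq]; field_simp
  have hreg : IsAhlforsRegular (volume : Measure (EuclideanSpace ℝ (Fin n))) n := by
    simpa using isAhlforsRegular_addHaar (volume : Measure (EuclideanSpace ℝ (Fin n)))
  obtain ⟨C, hC, hbound⟩ := statement13_general hreg hn ((div_lt_one hq_pos).1 hq_inv)
    (isA1qWeight_of_muckA1q hw hq_pos.le hA1q)
  refine ⟨C, hC, fun a r f hr hf => iSup_le fun γ => ?_⟩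
  simp only [wSet_rpow_eq_withDensity hw.2.1 hq_pos.le, wLp_one,
    fracIntE_eq_rieszPotential hαn.le, ← hexp]
  exact hbound a r _ hr (by have := hf.1; fun_prop) _
end

section
/- Let 0 < α < n, 1 < p < n/α, 1/q = 1/p − α/n, and w ∈ A_{p,q}. Suppose ψ₁ and ψ₂ are positive functions on ℝⁿ × (0,∞) for which there is a constant C > 0, independent of a and r, with ∫_r^∞ (w^p(B(a,t))^{1/p} / w^q(B(a,t))^{1/q})·ψ₁(a,t) dt/t ≤ C·ψ₂(a,r) for every (a,r) ∈ ℝⁿ × (0,∞). Then I_α is bounded from M^{p,w^p}_{ψ₁} to M^{q,w^q}_{ψ₂}: there is C' > 0 such that ‖I_α f‖_{M^{q,w^q}_{ψ₂}} ≤ C'·‖f‖_{M^{p,w^p}_{ψ₁}} for every f ∈ M^{p,w^p}_{ψ₁}. -/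
open MeasureTheory Metric Set
open scoped ENNReal

/-!
With `u = w ^ q`, `σ = w ^ (-p')` and `h = |f| * w ^ p'`, the potential `I_α f` is the integral of
`h` against the Riesz kernel with respect to `σ`, and `‖f‖_{L^p(w ^ p)}` is the norm of `h` in
`L^p(σ)`. The `A_{p,q}` condition makes `u` and `σ` doubling and reverse doubling, and bounds the
kernel by `u(B) ^ (-1 / q) * σ(B) ^ (-1 / p')` on balls `B` of radius comparable to the distance of
the two points.

Decomposing the kernel dyadically, the potential at `x` is at most a multiple of
`∑ k, u(B_k) ^ (-1 / q) * A_k`, where `B_k = B(x, 2 ^ k)` and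
`A_k = σ(B_k) ^ (-1 / p') * ∫_{B_k} h ∂σ ≤ ‖h‖`. As the masses `u(B_k)` grow geometrically,
Hedberg's trick bounds the `q`-th power of this sum by `‖h‖ ^ (q - s) * ∑ k, A_k ^ s / u(B_k)` for
`p < s < q`, and the integral of the last sum with respect to `u` is at most a multiple of
`‖h‖ ^ s`, by Tonelli and the geometric growth of `σ(B_k)`. Hence `I_α` maps `L^p(w ^ p)` to
`L^q(w ^ q)`.

Applying this to the part of `f` in `B(a, 2r)`, and the kernel bound on dyadic annuli to the rest,
gives Guliyev's local estimate of `‖I_α f‖_{L^q(w ^ q)}` on `B(a, r)` by `w ^ q (B(a, r)) ^ (1 / q)`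
times `∫_r^∞ ‖f‖_{L^p(w ^ p)(B(a, t))} * w ^ q (B(a, t)) ^ (-1 / q) dt / t`. Inserting the Morrey
bound for `f` under the integral sign turns this into the hypothesis on `ψ₁` and `ψ₂`.
-/

/-- A two-sided sequence of positive finite numbers growing at least geometrically, with ratio at
least `η⁻¹ > 1`. The model is the sequence of measures of the dyadic dilates of a ball. -/
structure IsLacunary (η : ℝ≥0∞) (v : ℤ → ℝ≥0∞) : Prop where
  ratio_lt_one : η < 1
  ne_zero : ∀ k, v k ≠ 0
  ne_top : ∀ k, v k ≠ ⊤
  le_mul_succ : ∀ k, v k ≤ η * v (k + 1)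

namespace IsLacunary

variable {η : ℝ≥0∞} {v : ℤ → ℝ≥0∞}

lemma monotone (hv : IsLacunary η v) : Monotone v :=
  monotone_int_of_le_succ fun k =>
    (hv.le_mul_succ k).trans (mul_le_of_le_one_left' hv.ratio_lt_one.le)

lemma le_pow_mul (hv : IsLacunary η v) (k : ℤ) (j : ℕ) : v k ≤ η ^ j * v (k + j) := by
  induction j with
  | zero => simp
  | succ j ih =>
    calc v k ≤ η ^ j * v (k + j) := ih
      _ ≤ η ^ j * (η * v (k + j + 1)) := by gcongr; exact hv.le_mul_succ _
      _ = η ^ (j + 1) * v (k + (j + 1 : ℕ)) := by push_cast; ring_nf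

lemma div_const (hv : IsLacunary η v) {V : ℝ≥0∞} (hV₀ : V ≠ 0) (hV : V ≠ ⊤) :
    IsLacunary η fun k => v k / V where
  ratio_lt_one := hv.ratio_lt_one
  ne_zero k := ENNReal.div_ne_zero.2 ⟨hv.ne_zero k, hV⟩
  ne_top k := ENNReal.div_ne_top (hv.ne_top k) hV₀
  le_mul_succ k := by
    rw [← mul_div_assoc]
    exact ENNReal.div_le_div_right (hv.le_mul_succ k) V

lemma exists_pow_mul_lt_one (hv : IsLacunary η v) {c : ℝ≥0∞} (hc : c ≠ ⊤) :
    ∃ j : ℕ, η ^ j * c < 1 := by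
  have hlim : Filter.Tendsto (fun j : ℕ => η ^ j * c) Filter.atTop (nhds (0 * c)) :=
    ENNReal.Tendsto.mul_const (ENNReal.tendsto_pow_atTop_nhds_zero_of_lt_one hv.ratio_lt_one)
      (Or.inr hc)
  rw [zero_mul] at hlim
  exact (hlim.eventually (gt_mem_nhds zero_lt_one)).exists

lemma exists_le_one_lt_succ (hv : IsLacunary η v) : ∃ K, v K ≤ 1 ∧ 1 < v (K + 1) := by
  have exists_le_one : ∃ k, v k ≤ 1 := by
    obtain ⟨j, hj⟩ := hv.exists_pow_mul_lt_one (hv.ne_top 0)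
    exact ⟨-j, (hv.le_pow_mul (-j) j).trans (by simpa using hj.le)⟩
  have bddAbove : ∃ B, ∀ k, v k ≤ 1 → k ≤ B := by
    obtain ⟨j, hj⟩ := hv.exists_pow_mul_lt_one (ENNReal.inv_ne_top.2 (hv.ne_zero 0))
    refine ⟨j, fun k hk => le_of_not_gt fun hjk => hj.not_ge ?_⟩
    rw [← ENNReal.div_eq_inv_mul.trans (mul_comm _ _),
      ENNReal.le_div_iff_mul_le (.inl (hv.ne_zero 0)) (.inl (hv.ne_top 0)), one_mul]
    calc v 0 ≤ η ^ j * v (0 + j) := hv.le_pow_mul 0 j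
      _ ≤ η ^ j * 1 := by gcongr; exact (hv.monotone (by lia)).trans hk
      _ = η ^ j := mul_one _
  obtain ⟨K, hK, hmax⟩ := Int.exists_greatest_of_bdd bddAbove exists_le_one
  exact ⟨K, hK, lt_of_not_ge fun h => by linarith [hmax _ h]⟩

end IsLacunary

lemma tsum_rpow_le_of_le_pow {η : ℝ≥0∞} {x : ℕ → ℝ≥0∞} {a : ℝ} (ha : 0 ≤ a)
    (hx : ∀ j, x j ≤ η ^ j) : ∑' j, x j ^ a ≤ (1 - η ^ a)⁻¹ := by
  rw [← ENNReal.tsum_geometric]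
  refine ENNReal.tsum_le_tsum fun j => (ENNReal.rpow_le_rpow (hx j) ha).trans_eq ?_
  rw [← ENNReal.rpow_natCast, ← ENNReal.rpow_natCast, ← ENNReal.rpow_mul, ← ENNReal.rpow_mul,
    mul_comm]

/-- The constant `(1 - η ^ a)⁻¹ + (1 - η ^ b)⁻¹` bounding two geometric series, one for each side
of the index at which a lacunary sequence of ratio `η` crosses a given level. -/
noncomputable def lacunaryConst (η : ℝ≥0∞) (a b : ℝ) : ℝ≥0∞ := (1 - η ^ a)⁻¹ + (1 - η ^ b)⁻¹

lemma lacunaryConst_ne_top {η : ℝ≥0∞} {a b : ℝ} (hη : η < 1) (ha : 0 < a) (hb : 0 < b) :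
    lacunaryConst η a b ≠ ⊤ := by
  have inv_ne_top {c : ℝ} (hc : 0 < c) : (1 - η ^ c)⁻¹ ≠ ⊤ :=
    ENNReal.inv_ne_top.2 (tsub_pos_of_lt (ENNReal.rpow_lt_one hη hc)).ne'
  exact ENNReal.add_ne_top.2 ⟨inv_ne_top ha, inv_ne_top hb⟩

lemma lacunaryConst_ne_zero (η : ℝ≥0∞) (a b : ℝ) : lacunaryConst η a b ≠ 0 := by
  have h : (1 - η ^ a)⁻¹ ≠ 0 := ENNReal.inv_ne_zero.2 (ENNReal.sub_ne_top ENNReal.one_ne_top)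
  simp [lacunaryConst, h]

/-- The power `v ^ (-b)` for large `v`, cut off to a multiple of `v ^ (a - b)` for small `v`. Its
sums over lacunary sequences are comparable to its maximum. -/
noncomputable def cutoffPower (a b : ℝ) (H c v : ℝ≥0∞) : ℝ≥0∞ := v ^ (-b) * min H (c * v ^ a)

lemma cutoffPower_mul {a b : ℝ} {H c t V : ℝ≥0∞} (ht₀ : t ≠ 0) (ht : t ≠ ⊤) (hV : V ≠ ⊤)
    (hcV : c * V ^ a = H) :
    cutoffPower a b H c (t * V) = min (t ^ (a - b)) (t ^ (-b)) * (H * V ^ (-b)) :=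
  calc cutoffPower a b H c (t * V)
    _ = t ^ (-b) * V ^ (-b) * min (H * 1) (H * t ^ a) := by
      rw [cutoffPower, ENNReal.mul_rpow_of_ne_top ht hV, ENNReal.mul_rpow_of_ne_top ht hV,
        mul_left_comm c, hcV, mul_one, mul_comm H]
    _ = t ^ (-b) * min (t ^ a) 1 * (H * V ^ (-b)) := by
      rw [← mul_min, min_comm]
      ring
    _ = min (t ^ (a - b)) (t ^ (-b)) * (H * V ^ (-b)) := by
      rw [mul_min, mul_one, ← ENNReal.rpow_add _ _ ht₀ ht, neg_add_eq_sub]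

namespace IsLacunary

variable {η : ℝ≥0∞} {v : ℤ → ℝ≥0∞} {a b : ℝ}

lemma tsum_min_rpow_le (hv : IsLacunary η v) (ha : 0 ≤ a) (hb : 0 ≤ b) :
    ∑' k, min (v k ^ a) (v k ^ (-b)) ≤ lacunaryConst η a b := by
  obtain ⟨K, hK, hK'⟩ := hv.exists_le_one_lt_succ
  have below (j : ℕ) : v (K - j) ≤ η ^ j :=
    calc v (K - j) ≤ η ^ j * v K := by simpa using hv.le_pow_mul (K - j) j
      _ ≤ η ^ j * 1 := by gcongr
      _ = η ^ j := mul_one _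
  have above (j : ℕ) : (v (K + 1 + j))⁻¹ ≤ η ^ j :=
    (ENNReal.inv_le_iff_le_mul (fun _ => hv.ne_zero _) (fun h => absurd h (hv.ne_top _))).2 <| by
      simpa only [mul_comm] using hK'.le.trans (hv.le_pow_mul (K + 1) j)
  rw [← (Equiv.addRight (K + 1)).tsum_eq fun k => min (v k ^ a) (v k ^ (-b)),
    tsum_of_nat_of_neg_add_one ENNReal.summable ENNReal.summable, add_comm, lacunaryConst]
  refine add_le_add ((ENNReal.tsum_le_tsum fun j => (min_le_left _ _).trans_eq ?_).trans
    (tsum_rpow_le_of_le_pow ha below)) ((ENNReal.tsum_le_tsum fun j =>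
      (min_le_right _ _).trans_eq ?_).trans (tsum_rpow_le_of_le_pow hb above))
  · simp only [Equiv.coe_addRight]
    ring_nf
  · rw [ENNReal.rpow_neg, ← ENNReal.inv_rpow, Equiv.coe_addRight]
    congr 3
    ring

lemma tsum_cutoffPower_le (hv : IsLacunary η v) (hb : 0 < b) (hab : b < a) {H : ℝ≥0∞}
    (hH : H ≠ ⊤) (c : ℝ≥0∞) :
    ∑' k, cutoffPower a b H c (v k) ≤
      lacunaryConst η (a - b) b * (H ^ (1 - b / a) * c ^ (b / a)) := by
  have ha : 0 < a := hb.trans hab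
  have hba : 0 < b / a := div_pos hb ha
  rcases eq_or_ne H 0 with rfl | hH₀
  · simp [cutoffPower]
  rcases eq_or_ne c 0 with rfl | hc₀
  · simp [cutoffPower]
  rcases eq_or_ne c ⊤ with rfl | hc
  · rw [ENNReal.top_rpow_of_pos hba, ENNReal.mul_top (by simp [hH₀, hH]),
      ENNReal.mul_top (lacunaryConst_ne_zero _ _ _)]
    exact le_top
  -- `V` is the level at which the two terms of the minimum coincide.
  set V := (H / c) ^ a⁻¹ with hV
  have hHc₀ : H / c ≠ 0 := ENNReal.div_ne_zero.2 ⟨hH₀, hc⟩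
  have hHc : H / c ≠ ⊤ := ENNReal.div_ne_top hH hc₀
  have hV₀ : V ≠ 0 := (ENNReal.rpow_pos (pos_iff_ne_zero.2 hHc₀) hHc).ne'
  have hVt : V ≠ ⊤ := ENNReal.rpow_ne_top_of_nonneg (inv_nonneg.2 ha.le) hHc
  have hcV : c * V ^ a = H := by
    rw [hV, ← ENNReal.rpow_mul, inv_mul_cancel₀ ha.ne', ENNReal.rpow_one,
      ENNReal.mul_div_cancel hc₀ hc]
  have hHV : H * V ^ (-b) = H ^ (1 - b / a) * c ^ (b / a) := by
    rw [hV, ← ENNReal.rpow_mul, show a⁻¹ * -b = -(b / a) by ring, ENNReal.rpow_neg,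
      ← ENNReal.inv_rpow, ENNReal.inv_div (.inl hc) (.inl hc₀),
      ENNReal.div_rpow_of_nonneg _ _ hba.le, ENNReal.rpow_sub _ _ hH₀ hH, ENNReal.rpow_one]
    simp only [div_eq_mul_inv]
    ring
  have hv' := hv.div_const hV₀ hVt
  have rescale (k : ℤ) : cutoffPower a b H c (v k) =
      min ((v k / V) ^ (a - b)) ((v k / V) ^ (-b)) * (H * V ^ (-b)) := by
    rw [← cutoffPower_mul (hv'.ne_zero k) (hv'.ne_top k) hVt hcV, ENNReal.div_mul_cancel hV₀ hVt]
  simp only [rescale, ENNReal.tsum_mul_right, hHV]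
  gcongr
  exact hv'.tsum_min_rpow_le (sub_pos.2 hab).le hb.le

lemma le_min_of_tsum_div_le (hv : IsLacunary η v) {A : ℤ → ℝ≥0∞} {H : ℝ≥0∞} (hA : ∀ k, A k ≤ H)
    {s : ℝ} (hs : 0 < s) (k : ℤ) :
    A k ≤ min H ((∑' k, A k ^ s / v k) ^ (1 / s) * v k ^ (1 / s)) := by
  refine le_min (hA k) ?_
  rw [← ENNReal.mul_rpow_of_nonneg _ _ (by positivity), one_div, ENNReal.le_rpow_inv_iff hs,
    ← ENNReal.div_le_iff (hv.ne_zero k) (hv.ne_top k)]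
  exact ENNReal.le_tsum k

-- Hedberg's inequality, with the maximal function replaced by the sum on the right.
lemma tsum_rpow_neg_mul_rpow_le (hv : IsLacunary η v) {A : ℤ → ℝ≥0∞} {H : ℝ≥0∞}
    (hA : ∀ k, A k ≤ H) (hH : H ≠ ⊤) {s q : ℝ} (hs : 0 < s) (hsq : s < q) :
    (∑' k, v k ^ (-(1 / q)) * A k) ^ q ≤
      lacunaryConst η (1 / s - 1 / q) (1 / q) ^ q * (H ^ (q - s) * ∑' k, A k ^ s / v k) := by
  have hq : 0 < q := hs.trans hsq
  set S := ∑' k, A k ^ s / v k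
  set K := lacunaryConst η (1 / s - 1 / q) (1 / q)
  have key : ∑' k, v k ^ (-(1 / q)) * A k ≤
      K * (H ^ (1 - 1 / q / (1 / s)) * (S ^ (1 / s)) ^ (1 / q / (1 / s))) :=
    (ENNReal.tsum_le_tsum fun k => mul_le_mul_right (hv.le_min_of_tsum_div_le hA hs k) _).trans
      (hv.tsum_cutoffPower_le (by positivity) (one_div_lt_one_div_of_lt hs hsq) hH _)
  calc (∑' k, v k ^ (-(1 / q)) * A k) ^ q
    _ ≤ (K * (H ^ (1 - 1 / q / (1 / s)) * (S ^ (1 / s)) ^ (1 / q / (1 / s)))) ^ q := by gcongr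
    _ = K ^ q * (H ^ (q - s) * S) := by
      rw [ENNReal.mul_rpow_of_nonneg _ _ hq.le, ENNReal.mul_rpow_of_nonneg _ _ hq.le,
        ← ENNReal.rpow_mul, ← ENNReal.rpow_mul, ← ENNReal.rpow_mul,
        show (1 - 1 / q / (1 / s)) * q = q - s by field_simp,
        show 1 / s * (1 / q / (1 / s) * q) = 1 by field_simp, ENNReal.rpow_one]

end IsLacunary

/-- A measure whose balls have positive finite mass, with both `μ (2B) ≤ D * μ B` and the reverse
inequality `μ B ≤ η * μ (2B)`, where `η < 1`. -/
structure IsTwoSidedDoubling {X : Type*} [PseudoMetricSpace X] [MeasurableSpace X]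
    (μ : Measure X) : Prop where
  ball_ne_zero : ∀ (x : X) {r : ℝ}, 0 < r → μ (ball x r) ≠ 0
  ball_ne_top : ∀ (x : X) {r : ℝ}, 0 < r → μ (ball x r) ≠ ⊤
  exists_doubling : ∃ D : ℝ≥0∞, D ≠ ⊤ ∧
    ∀ (x : X) {r : ℝ}, 0 < r → μ (ball x (2 * r)) ≤ D * μ (ball x r)
  exists_reverse_doubling : ∃ η : ℝ≥0∞, η < 1 ∧
    ∀ (x : X) {r : ℝ}, 0 < r → μ (ball x r) ≤ η * μ (ball x (2 * r))

namespace IsTwoSidedDoubling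

variable {X : Type*} [PseudoMetricSpace X] [MeasurableSpace X] {μ : Measure X}

lemma exists_isLacunary (hμ : IsTwoSidedDoubling μ) :
    ∃ η, ∀ x, IsLacunary η fun k : ℤ => μ (ball x (2 ^ k)) := by
  obtain ⟨η, hη, hle⟩ := hμ.exists_reverse_doubling
  have two_zpow_pos (k : ℤ) : (0 : ℝ) < 2 ^ k := by positivity
  refine ⟨η, fun x => ⟨hη, fun k => hμ.ball_ne_zero x (two_zpow_pos k),
    fun k => hμ.ball_ne_top x (two_zpow_pos k), fun k => ?_⟩⟩
  rw [zpow_add_one₀ two_ne_zero, mul_comm ((2 : ℝ) ^ k)]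
  exact hle x (two_zpow_pos k)

lemma measure_setOf_dist_eq_zero (hμ : IsTwoSidedDoubling μ) (x : X) :
    μ {y | dist x y = 0} = 0 := by
  obtain ⟨η, hη⟩ := hμ.exists_isLacunary
  have hle (j : ℕ) : μ {y | dist x y = 0} ≤ η ^ j * μ (ball x 1) :=
    calc μ {y | dist x y = 0} ≤ μ (ball x (2 ^ (-j : ℤ))) :=
          measure_mono fun y (hy : dist x y = 0) => by
            rw [mem_ball', hy]
            positivity
      _ ≤ η ^ j * μ (ball x 1) := by simpa using (hη x).le_pow_mul (-j) j
  have hlim := ENNReal.Tendsto.mul_const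
    (ENNReal.tendsto_pow_atTop_nhds_zero_of_lt_one (hη x).ratio_lt_one)
    (.inr (hμ.ball_ne_top x one_pos))
  rw [zero_mul] at hlim
  exact le_zero_iff.1 (ge_of_tendsto' hlim hle)

lemma exists_measure_ball_le_of_mem (hμ : IsTwoSidedDoubling μ) :
    ∃ D : ℝ≥0∞, D ≠ ⊤ ∧ 1 ≤ D ∧
      ∀ ⦃x y : X⦄ ⦃r : ℝ⦄, y ∈ ball x r → μ (ball x r) ≤ D * μ (ball y r) := by
  obtain ⟨D, hD, hle⟩ := hμ.exists_doubling
  refine ⟨max D 1, by simp [hD], le_max_right _ _, fun x y r hy => ?_⟩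
  have hsub : ball x r ⊆ ball y (2 * r) := ball_subset_ball' (by linarith [mem_ball'.1 hy])
  calc μ (ball x r) ≤ D * μ (ball y r) := (measure_mono hsub).trans (hle y (pos_of_mem_ball hy))
    _ ≤ max D 1 * μ (ball y r) := by gcongr; exact le_max_left _ _

lemma isLocallyFiniteMeasure (hμ : IsTwoSidedDoubling μ) : IsLocallyFiniteMeasure μ :=
  ⟨fun x => ⟨ball x 1, ball_mem_nhds x one_pos, (hμ.ball_ne_top x one_pos).lt_top⟩⟩

lemma exists_tsum_cutoffPower_le (hσ : IsTwoSidedDoubling σ) {p s : ℝ} (hp : 1 < p) (hps : p < s) :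
    ∃ K : ℝ≥0∞, K ≠ ⊤ ∧ ∀ {H : ℝ≥0∞} (c : ℝ≥0∞) (y : X), H ≠ ⊤ →
      ∑' k : ℤ, cutoffPower ((s - 1) / p) (1 - 1 / p) (H ^ (s - 1)) (c ^ (s - 1))
        (σ (ball y (2 ^ k))) ≤ K * (H ^ (s - p) * c ^ (p - 1)) := by
  have hp₀ : 0 < p := by linarith
  have hs₁ : 0 < s - 1 := by linarith
  have hb : 0 < 1 - 1 / p := sub_pos.2 ((div_lt_one hp₀).2 hp)
  have hba : 1 - 1 / p < (s - 1) / p := by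
    rw [one_sub_div hp₀.ne']
    gcongr
  have hratio : (1 - 1 / p) / ((s - 1) / p) = (p - 1) / (s - 1) := by field_simp
  obtain ⟨η, hη⟩ := hσ.exists_isLacunary
  rcases isEmpty_or_nonempty X with _ | ⟨⟨z⟩⟩
  · exact ⟨0, ENNReal.zero_ne_top, fun _ y => isEmptyElim y⟩
  refine ⟨_, lacunaryConst_ne_top (hη z).ratio_lt_one (sub_pos.2 hba) hb, fun {H} c y hH => ?_⟩
  refine ((hη y).tsum_cutoffPower_le hb hba (by finiteness) _).trans_eq ?_
  rw [hratio, ← ENNReal.rpow_mul, ← ENNReal.rpow_mul, mul_div_cancel₀ _ hs₁.ne',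
    show (s - 1) * (1 - (p - 1) / (s - 1)) = s - p by field_simp; ring]

lemma exists_setLIntegral_inv_measure_ball_le (hμ : IsTwoSidedDoubling μ) :
    ∃ D : ℝ≥0∞, D ≠ ⊤ ∧
      ∀ (y : X) {r : ℝ}, 0 < r → ∫⁻ x in ball y r, (μ (ball x r))⁻¹ ∂μ ≤ D := by
  obtain ⟨D, hD, -, hle⟩ := hμ.exists_measure_ball_le_of_mem
  refine ⟨D, hD, fun y r hr => ?_⟩
  have hy₀ := hμ.ball_ne_zero y hr
  have hyt := hμ.ball_ne_top y hr
  calc ∫⁻ x in ball y r, (μ (ball x r))⁻¹ ∂μ ≤ ∫⁻ _ in ball y r, D / μ (ball y r) ∂μ := by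
        refine setLIntegral_mono measurable_const fun x hx => ?_
        rw [ENNReal.le_div_iff_mul_le (.inl hy₀) (.inl hyt), ← ENNReal.div_eq_inv_mul]
        exact ENNReal.div_le_of_le_mul (hle hx)
    _ = D := by rw [setLIntegral_const, ENNReal.div_mul_cancel hy₀ hyt]

variable [SecondCountableTopology X]

lemma sigmaFinite (hμ : IsTwoSidedDoubling μ) : SigmaFinite μ :=
  have := hμ.isLocallyFiniteMeasure
  inferInstance

lemma measurable_measure_ball [OpensMeasurableSpace X] (hμ : IsTwoSidedDoubling μ) (r : ℝ) :
    Measurable fun x => μ (ball x r) :=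
  have := hμ.sigmaFinite
  measurable_measure_prodMk_left
    (isOpen_lt (continuous_snd.dist continuous_fst) continuous_const : IsOpen
      {z : X × X | dist z.2 z.1 < r}).measurableSet

end IsTwoSidedDoubling

/-- The integral of `h` multiplied by the power of the total mass for which Hölder's inequality
bounds it by the `L^p` norm of `h`. -/
noncomputable def normalizedIntegral {X : Type*} [MeasurableSpace X] (p : ℝ) (h : X → ℝ≥0∞)
    (ν : Measure X) : ℝ≥0∞ :=
  ν univ ^ (-(1 - 1 / p)) * ∫⁻ y, h y ∂ν

section NormalizedIntegral

variable {X : Type*} [MeasurableSpace X] {ν : Measure X} {h : X → ℝ≥0∞} {p s : ℝ}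

lemma lintegral_le_rpow_lintegral_mul_measure_univ (hm : AEMeasurable h ν) (hp : 1 ≤ p) :
    ∫⁻ y, h y ∂ν ≤ (∫⁻ y, h y ^ p ∂ν) ^ (1 / p) * ν univ ^ (1 - 1 / p) := by
  simpa [eLpNorm'] using
    eLpNorm'_le_eLpNorm'_mul_rpow_measure_univ one_pos hp hm.aestronglyMeasurable

lemma normalizedIntegral_le (hm : AEMeasurable h ν) (hp : 1 ≤ p) (hν₀ : ν univ ≠ 0)
    (hν : ν univ ≠ ⊤) : normalizedIntegral p h ν ≤ (∫⁻ y, h y ^ p ∂ν) ^ (1 / p) :=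
  calc normalizedIntegral p h ν
    _ ≤ ν univ ^ (-(1 - 1 / p)) * ((∫⁻ y, h y ^ p ∂ν) ^ (1 / p) * ν univ ^ (1 - 1 / p)) := by
      rw [normalizedIntegral]
      gcongr
      exact lintegral_le_rpow_lintegral_mul_measure_univ hm hp
    _ = (∫⁻ y, h y ^ p ∂ν) ^ (1 / p) := by
      rw [mul_left_comm, ← ENNReal.rpow_add _ _ hν₀ hν, neg_add_cancel, ENNReal.rpow_zero, mul_one]

lemma normalizedIntegral_le_mul_rpow_of_lintegral_le (hν₀ : ν univ ≠ 0) (hν : ν univ ≠ ⊤)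
    {c : ℝ≥0∞} (hle : ∫⁻ y, h y ∂ν ≤ c * ν univ) :
    normalizedIntegral p h ν ≤ c * ν univ ^ (1 / p) :=
  calc normalizedIntegral p h ν ≤ ν univ ^ (-(1 - 1 / p)) * (c * ν univ) := by
        rw [normalizedIntegral]
        gcongr
    _ = c * (ν univ ^ (-(1 - 1 / p)) * ν univ ^ (1 : ℝ)) := by rw [ENNReal.rpow_one]; ring
    _ = c * ν univ ^ (1 / p) := by rw [← ENNReal.rpow_add _ _ hν₀ hν]; ring_nf

lemma lintegral_le_two_mul_setLIntegral (hm : Measurable h) (hν₀ : ν univ ≠ 0) (hν : ν univ ≠ ⊤)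
    (hfin : ∫⁻ y, h y ∂ν ≠ ⊤) :
    ∫⁻ y, h y ∂ν ≤ 2 * ∫⁻ y in {y | ∫⁻ z, h z ∂ν < 2 * h y * ν univ}, h y ∂ν := by
  set I := ∫⁻ y, h y ∂ν
  set E := {y | I < 2 * h y * ν univ}
  have hE : MeasurableSet E := measurableSet_lt measurable_const (by fun_prop)
  have hcompl : ∫⁻ y in Eᶜ, h y ∂ν ≤ I / 2 :=
    calc ∫⁻ y in Eᶜ, h y ∂ν ≤ ∫⁻ _ in Eᶜ, I / 2 / ν univ ∂ν := by
          refine setLIntegral_mono measurable_const fun y (hy : ¬ I < _) => ?_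
          rw [ENNReal.le_div_iff_mul_le (.inl hν₀) (.inl hν),
            ENNReal.le_div_iff_mul_le (.inl two_ne_zero) (.inl ENNReal.ofNat_ne_top)]
          exact le_trans (by ring_nf; rfl) (not_lt.1 hy)
      _ ≤ ∫⁻ _, I / 2 / ν univ ∂ν := setLIntegral_le_lintegral _ _
      _ = I / 2 := by rw [lintegral_const, ENNReal.div_mul_cancel hν₀ hν]
  have hhalf : I / 2 + I / 2 ≤ I / 2 + ∫⁻ y in E, h y ∂ν :=
    calc I / 2 + I / 2 = ∫⁻ y in E, h y ∂ν + ∫⁻ y in Eᶜ, h y ∂ν := by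
          rw [ENNReal.add_halves, lintegral_add_compl h hE]
      _ ≤ I / 2 + ∫⁻ y in E, h y ∂ν := by rw [add_comm]; gcongr
  rwa [ENNReal.add_le_add_iff_left (ENNReal.div_ne_top hfin two_ne_zero),
    ENNReal.div_le_iff two_ne_zero ENNReal.ofNat_ne_top, mul_comm] at hhalf

lemma normalizedIntegral_rpow_le (hm : Measurable h) (hp : 1 ≤ p) (hs : 1 ≤ s)
    (hν₀ : ν univ ≠ 0) (hν : ν univ ≠ ⊤) {H : ℝ≥0∞} (hH : H ≠ ⊤)
    (hle : (∫⁻ y, h y ^ p ∂ν) ^ (1 / p) ≤ H) :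
    normalizedIntegral p h ν ^ s ≤ 2 * ∫⁻ y, h y *
      cutoffPower ((s - 1) / p) (1 - 1 / p) (H ^ (s - 1)) ((2 * h y) ^ (s - 1)) (ν univ) ∂ν := by
  have hs' : 0 ≤ s - 1 := sub_nonneg.2 hs
  set N := normalizedIntegral p h ν with hN
  set I := ∫⁻ y, h y ∂ν with hI
  set m := ν univ
  set E := {y | I < 2 * h y * m}
  have hNH : N ≤ H := (normalizedIntegral_le hm.aemeasurable hp hν₀ hν).trans hle
  have hfin : I ≠ ⊤ := ne_top_of_le_ne_top (ENNReal.mul_ne_top (ne_top_of_le_ne_top hH hle)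
    (ENNReal.rpow_ne_top_of_nonneg (sub_nonneg.2 (div_le_one_of_le₀ hp (by linarith))) hν))
    (lintegral_le_rpow_lintegral_mul_measure_univ hm.aemeasurable hp)
  have hNE {y} (hy : y ∈ E) : N ≤ 2 * h y * m ^ (1 / p) :=
    normalizedIntegral_le_mul_rpow_of_lintegral_le hν₀ hν (le_of_lt hy)
  calc N ^ s = m ^ (-(1 - 1 / p)) * N ^ (s - 1) * I := by
        rw [mul_right_comm, hI, ← normalizedIntegral, ← hN]
        nth_rw 2 [← ENNReal.rpow_one N]
        rw [← ENNReal.rpow_add_of_nonneg _ _ zero_le_one hs', add_sub_cancel]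
    _ ≤ m ^ (-(1 - 1 / p)) * N ^ (s - 1) * (2 * ∫⁻ y in E, h y ∂ν) := by
        gcongr
        exact lintegral_le_two_mul_setLIntegral hm hν₀ hν hfin
    _ = 2 * ∫⁻ y in E, h y * (m ^ (-(1 - 1 / p)) * N ^ (s - 1)) ∂ν := by
        rw [lintegral_mul_const _ hm]
        ring
    _ ≤ 2 * ∫⁻ y in E, h y *
          cutoffPower ((s - 1) / p) (1 - 1 / p) (H ^ (s - 1)) ((2 * h y) ^ (s - 1)) m ∂ν := by
        gcongr 2 * ?_
        simp only [cutoffPower]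
        refine setLIntegral_mono (by fun_prop) fun y hy => ?_
        gcongr
        refine le_min (by gcongr) ((ENNReal.rpow_le_rpow (hNE hy) hs').trans_eq ?_)
        rw [ENNReal.mul_rpow_of_nonneg _ _ hs', ← ENNReal.rpow_mul, one_div_mul_eq_div]
    _ ≤ _ := by
        gcongr
        exact Measure.restrict_le_self

end NormalizedIntegral

lemma lintegral_setLIntegral_ball_swap {X : Type*} [PseudoMetricSpace X] [MeasurableSpace X]
    [OpensMeasurableSpace X] [SecondCountableTopology X] (μ ν : Measure X) [SFinite μ] [SFinite ν]
    {F : X → X → ℝ≥0∞} (hF : Measurable F.uncurry) (r : ℝ) :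
    ∫⁻ x, ∫⁻ y in ball x r, F x y ∂ν ∂μ = ∫⁻ y, ∫⁻ x in ball y r, F x y ∂μ ∂ν := by
  have hmeas : MeasurableSet {z : X × X | dist z.1 z.2 < r} :=
    (isOpen_lt continuous_dist continuous_const).measurableSet
  have hswap := lintegral_lintegral_swap (μ := μ) (ν := ν)
    (f := fun x y => {z : X × X | dist z.1 z.2 < r}.indicator F.uncurry (x, y))
    (hF.indicator hmeas).aemeasurable
  convert hswap using 3 with x y
  · rw [← lintegral_indicator measurableSet_ball]
    simp only [indicator, mem_ball', mem_ofPred_eq, Function.uncurry]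
  · rw [← lintegral_indicator measurableSet_ball]
    simp only [indicator, mem_ball, mem_ofPred_eq, Function.uncurry]

lemma cutoffPower_le_of_comparable {v v' D : ℝ≥0∞} {a b : ℝ} (ha : 0 < a) (hb : 0 ≤ b)
    (hD : 1 ≤ D) (hDt : D ≠ ⊤) (hle : v ≤ D * v') (hle' : v' ≤ D * v) (H c : ℝ≥0∞) :
    cutoffPower a b H c v ≤ D ^ b * D ^ a * cutoffPower a b H c v' := by
  have hDa : 1 ≤ D ^ a := ENNReal.one_le_rpow hD ha
  have hneg : v ^ (-b) ≤ D ^ b * v' ^ (-b) :=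
    calc v ^ (-b) ≤ (v' / D) ^ (-b) := by
          rw [ENNReal.rpow_neg, ENNReal.rpow_neg]
          gcongr
          exact ENNReal.div_le_of_le_mul' hle'
      _ = D ^ b * v' ^ (-b) := by
          rw [ENNReal.rpow_neg, ENNReal.div_rpow_of_nonneg _ _ hb, ENNReal.rpow_neg,
            ENNReal.inv_div (.inl (ENNReal.rpow_ne_top_of_nonneg hb hDt))
              (.inl (ENNReal.rpow_pos (one_pos.trans_le hD) hDt).ne'), div_eq_mul_inv]
  have hmin : min H (c * v ^ a) ≤ D ^ a * min H (c * v' ^ a) :=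
    calc min H (c * v ^ a) ≤ min (D ^ a * H) (D ^ a * (c * v' ^ a)) := by
          refine min_le_min (le_mul_of_one_le_left' hDa) ?_
          rw [mul_left_comm, ← ENNReal.mul_rpow_of_nonneg _ _ ha.le]
          gcongr
      _ = D ^ a * min H (c * v' ^ a) := (mul_min _ _ _).symm
  calc cutoffPower a b H c v
    _ ≤ D ^ b * v' ^ (-b) * (D ^ a * min H (c * v' ^ a)) := mul_le_mul' hneg hmin
    _ = D ^ b * D ^ a * cutoffPower a b H c v' := by rw [cutoffPower]; ring

lemma measurable_cutoffPower {Y : Type*} [MeasurableSpace Y] {c v : Y → ℝ≥0∞} (hc : Measurable c)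
    (hv : Measurable v) (a b : ℝ) (H : ℝ≥0∞) :
    Measurable fun y => cutoffPower a b H (c y) (v y) := by
  unfold cutoffPower
  fun_prop

namespace IsTwoSidedDoubling

variable {X : Type*} [PseudoMetricSpace X] [MeasurableSpace X] [OpensMeasurableSpace X]
  [SecondCountableTopology X] {σ u : Measure X} {p s : ℝ}

lemma lintegral_normalizedIntegral_rpow_div_le (hσ : IsTwoSidedDoubling σ)
    (hu : IsTwoSidedDoubling u) (hp : 1 ≤ p) (hs : 1 ≤ s) {h : X → ℝ≥0∞} (hm : Measurable h)
    {r : ℝ} (hr : 0 < r) {H : ℝ≥0∞} (hH : H ≠ ⊤) (hle : (∫⁻ y, h y ^ p ∂σ) ^ (1 / p) ≤ H) :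
    ∫⁻ x, normalizedIntegral p h (σ.restrict (ball x r)) ^ s / u (ball x r) ∂u ≤
      2 * ∫⁻ y, h y * ∫⁻ x in ball y r, cutoffPower ((s - 1) / p) (1 - 1 / p) (H ^ (s - 1))
        ((2 * h y) ^ (s - 1)) (σ (ball x r)) * (u (ball x r))⁻¹ ∂u ∂σ := by
  have := hσ.sigmaFinite
  have := hu.sigmaFinite
  have hσr := hσ.measurable_measure_ball r
  have hur := hu.measurable_measure_ball r
  set Φ : X → X → ℝ≥0∞ := fun x y => cutoffPower ((s - 1) / p) (1 - 1 / p) (H ^ (s - 1))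
    ((2 * h y) ^ (s - 1)) (σ (ball x r)) * (u (ball x r))⁻¹
  have hΦ : Measurable fun z : X × X => Φ z.1 z.2 :=
    (measurable_cutoffPower (by fun_prop) (hσr.comp measurable_fst) _ _ _).mul
      (hur.comp measurable_fst).inv
  have hle_restrict (x : X) : (∫⁻ y in ball x r, h y ^ p ∂σ) ^ (1 / p) ≤ H :=
    hle.trans' (by gcongr; exact Measure.restrict_le_self)
  calc ∫⁻ x, normalizedIntegral p h (σ.restrict (ball x r)) ^ s / u (ball x r) ∂u
    _ ≤ ∫⁻ x, 2 * ∫⁻ y in ball x r, h y * Φ x y ∂σ ∂u := by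
      refine lintegral_mono fun x => ?_
      simp only [Φ, ← mul_assoc (h _)]
      rw [div_eq_mul_inv, lintegral_mul_const' _ _ (ENNReal.inv_ne_top.2 (hu.ball_ne_zero x hr)),
        ← mul_assoc]
      gcongr
      simpa only [Measure.restrict_apply_univ] using
        normalizedIntegral_rpow_le (ν := σ.restrict (ball x r)) hm hp hs
          (by simpa using hσ.ball_ne_zero x hr) (by simpa using hσ.ball_ne_top x hr) hH
          (hle_restrict x)
    _ = 2 * ∫⁻ y, ∫⁻ x in ball y r, h y * Φ x y ∂u ∂σ := by
      rw [lintegral_const_mul' _ _ ENNReal.ofNat_ne_top, lintegral_setLIntegral_ball_swap]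
      exact (hm.comp measurable_snd).mul hΦ
    _ = 2 * ∫⁻ y, h y * ∫⁻ x in ball y r, Φ x y ∂u ∂σ := by
      congr! 3 with y
      exact lintegral_const_mul _ (hΦ.comp measurable_prodMk_right)

lemma exists_setLIntegral_cutoffPower_le (hσ : IsTwoSidedDoubling σ) (hu : IsTwoSidedDoubling u)
    {a b : ℝ} (ha : 0 < a) (hb : 0 ≤ b) :
    ∃ K : ℝ≥0∞, K ≠ ⊤ ∧ ∀ (H c : ℝ≥0∞) (y : X) {r : ℝ}, 0 < r →
      ∫⁻ x in ball y r, cutoffPower a b H c (σ (ball x r)) * (u (ball x r))⁻¹ ∂u ≤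
        K * cutoffPower a b H c (σ (ball y r)) := by
  obtain ⟨D, hDt, hD, hσD⟩ := hσ.exists_measure_ball_le_of_mem
  obtain ⟨D', hD't, huD⟩ := hu.exists_setLIntegral_inv_measure_ball_le
  refine ⟨D ^ b * D ^ a * D', by finiteness, fun H c y r hr => ?_⟩
  have hur : Measurable fun x => (u (ball x r))⁻¹ := (hu.measurable_measure_ball r).inv
  calc ∫⁻ x in ball y r, cutoffPower a b H c (σ (ball x r)) * (u (ball x r))⁻¹ ∂u
    _ ≤ ∫⁻ x in ball y r, D ^ b * D ^ a * cutoffPower a b H c (σ (ball y r)) *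
          (u (ball x r))⁻¹ ∂u := by
      refine setLIntegral_mono (hur.const_mul _) fun x hx => ?_
      gcongr
      exact cutoffPower_le_of_comparable ha hb hD hDt (hσD (mem_ball_comm.1 hx)) (hσD hx) H c
    _ ≤ D ^ b * D ^ a * cutoffPower a b H c (σ (ball y r)) * D' := by
      rw [lintegral_const_mul _ hur]
      gcongr
      exact huD y hr
    _ = D ^ b * D ^ a * D' * cutoffPower a b H c (σ (ball y r)) := by ring

end IsTwoSidedDoubling

namespace IsTwoSidedDoubling

variable {X : Type*} [PseudoMetricSpace X] [MeasurableSpace X] [OpensMeasurableSpace X]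
  [SecondCountableTopology X] {σ u : Measure X} {p s : ℝ}

lemma measurable_normalizedIntegral_ball (hσ : IsTwoSidedDoubling σ) {h : X → ℝ≥0∞}
    (hm : Measurable h) (r : ℝ) :
    Measurable fun x => normalizedIntegral p h (σ.restrict (ball x r)) := by
  have := hσ.sigmaFinite
  have hball : MeasurableSet {z : X × X | dist z.2 z.1 < r} :=
    (isOpen_lt (continuous_snd.dist continuous_fst) continuous_const).measurableSet
  have hint : Measurable fun x => ∫⁻ y in ball x r, h y ∂σ := by
    simp only [← lintegral_indicator measurableSet_ball]
    exact ((hm.comp measurable_snd).indicator hball).lintegral_prod_right'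
  simp only [normalizedIntegral, Measure.restrict_apply_univ]
  exact ((hσ.measurable_measure_ball r).pow_const _).mul hint

lemma exists_lintegral_tsum_normalizedIntegral_le_lintegral_tsum_cutoffPower
    (hσ : IsTwoSidedDoubling σ) (hu : IsTwoSidedDoubling u) (hp : 1 < p) (hs : 1 < s) :
    ∃ K : ℝ≥0∞, K ≠ ⊤ ∧ ∀ {h : X → ℝ≥0∞} {H : ℝ≥0∞}, Measurable h → H ≠ ⊤ →
      (∫⁻ y, h y ^ p ∂σ) ^ (1 / p) ≤ H →
      ∫⁻ x, ∑' k : ℤ, normalizedIntegral p h (σ.restrict (ball x (2 ^ k))) ^ s /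
        u (ball x (2 ^ k)) ∂u ≤
      K * ∫⁻ y, h y * ∑' k : ℤ, cutoffPower ((s - 1) / p) (1 - 1 / p) (H ^ (s - 1))
        ((2 * h y) ^ (s - 1)) (σ (ball y (2 ^ k))) ∂σ := by
  have hp₀ : 0 < p := by linarith
  obtain ⟨K, hK, hle⟩ := hσ.exists_setLIntegral_cutoffPower_le hu
    (div_pos (by linarith) hp₀ : 0 < (s - 1) / p) (sub_nonneg.2 ((div_le_one hp₀).2 hp.le))
  refine ⟨2 * K, by finiteness, fun {h H} hm hH hhH => ?_⟩
  set cut : ℤ → X → ℝ≥0∞ := fun k y => cutoffPower ((s - 1) / p) (1 - 1 / p) (H ^ (s - 1))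
    ((2 * h y) ^ (s - 1)) (σ (ball y (2 ^ k)))
  have hcut (k : ℤ) : Measurable (cut k) :=
    measurable_cutoffPower (by fun_prop) (hσ.measurable_measure_ball _) _ _ _
  have scale_le (k : ℤ) : ∫⁻ x, normalizedIntegral p h (σ.restrict (ball x (2 ^ k))) ^ s /
      u (ball x (2 ^ k)) ∂u ≤ 2 * K * ∫⁻ y, h y * cut k y ∂σ := by
    have two_zpow_pos : (0 : ℝ) < 2 ^ k := by positivity
    calc _ ≤ 2 * ∫⁻ y, h y * (K * cut k y) ∂σ := by
          refine (hσ.lintegral_normalizedIntegral_rpow_div_le hu hp.le hs.le hm two_zpow_pos hH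
            hhH).trans ?_
          gcongr with y
          exact hle _ _ y two_zpow_pos
      _ = 2 * K * ∫⁻ y, h y * cut k y ∂σ := by
          simp only [mul_left_comm (h _)]
          rw [lintegral_const_mul' _ _ hK, mul_assoc]
  calc ∫⁻ x, ∑' k : ℤ, normalizedIntegral p h (σ.restrict (ball x (2 ^ k))) ^ s /
          u (ball x (2 ^ k)) ∂u
    _ = ∑' k : ℤ, ∫⁻ x, normalizedIntegral p h (σ.restrict (ball x (2 ^ k))) ^ s /
          u (ball x (2 ^ k)) ∂u :=
      lintegral_tsum fun k => (((hσ.measurable_normalizedIntegral_ball hm _).pow_const _).div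
        (hu.measurable_measure_ball _)).aemeasurable
    _ ≤ ∑' k : ℤ, 2 * K * ∫⁻ y, h y * cut k y ∂σ := ENNReal.tsum_le_tsum scale_le
    _ = 2 * K * ∫⁻ y, h y * ∑' k : ℤ, cut k y ∂σ := by
      rw [ENNReal.tsum_mul_left, ← lintegral_tsum fun k => by fun_prop]
      simp only [ENNReal.tsum_mul_left]

-- This replaces the strong type bound for the maximal function, and needs no covering argument.
lemma exists_lintegral_tsum_normalizedIntegral_le (hσ : IsTwoSidedDoubling σ)
    (hu : IsTwoSidedDoubling u) (hp : 1 < p) (hps : p < s) :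
    ∃ K : ℝ≥0∞, K ≠ ⊤ ∧ ∀ {h : X → ℝ≥0∞}, Measurable h → ∫⁻ y, h y ^ p ∂σ ≠ ⊤ →
      ∫⁻ x, ∑' k : ℤ, normalizedIntegral p h (σ.restrict (ball x (2 ^ k))) ^ s /
        u (ball x (2 ^ k)) ∂u ≤ K * (∫⁻ y, h y ^ p ∂σ) ^ (s / p) := by
  have hp₀ : 0 < p := by linarith
  have hp₁ : 0 ≤ p - 1 := by linarith
  obtain ⟨K₁, hK₁, h₁⟩ :=
    hσ.exists_lintegral_tsum_normalizedIntegral_le_lintegral_tsum_cutoffPower hu hp (hp.trans hps)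
  obtain ⟨K₂, hK₂, h₂⟩ := hσ.exists_tsum_cutoffPower_le hp hps
  refine ⟨K₁ * (K₂ * 2 ^ (p - 1)), by finiteness, fun {h} hm hJ => ?_⟩
  set J := ∫⁻ y, h y ^ p ∂σ
  have hH : J ^ (1 / p) ≠ ⊤ := by finiteness
  have hpow (y : X) : h y * h y ^ (p - 1) = h y ^ p := by
    nth_rw 1 [← ENNReal.rpow_one (h y)]
    rw [← ENNReal.rpow_add_of_nonneg _ _ zero_le_one hp₁, add_sub_cancel]
  refine (h₁ hm hH le_rfl).trans ?_
  rw [mul_assoc]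
  gcongr
  calc ∫⁻ y, h y * ∑' k : ℤ, cutoffPower ((s - 1) / p) (1 - 1 / p) ((J ^ (1 / p)) ^ (s - 1))
          ((2 * h y) ^ (s - 1)) (σ (ball y (2 ^ k))) ∂σ
    _ ≤ ∫⁻ y, h y * (K₂ * ((J ^ (1 / p)) ^ (s - p) * (2 * h y) ^ (p - 1))) ∂σ := by
      gcongr with y
      exact h₂ _ y hH
    _ = ∫⁻ y, K₂ * 2 ^ (p - 1) * J ^ ((s - p) / p) * h y ^ p ∂σ := by
      congr! 2 with y
      rw [ENNReal.mul_rpow_of_nonneg _ _ hp₁, ← ENNReal.rpow_mul, one_div_mul_eq_div, ← hpow]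
      ring
    _ = K₂ * 2 ^ (p - 1) * (J ^ ((s - p) / p) * J ^ (1 : ℝ)) := by
      rw [lintegral_const_mul _ (by fun_prop), ENNReal.rpow_one, mul_assoc]
    _ = K₂ * 2 ^ (p - 1) * J ^ (s / p) := by
      rw [← ENNReal.rpow_add_of_nonneg _ _ (div_nonneg (by linarith) hp₀.le) zero_le_one,
        sub_div, div_self hp₀.ne', sub_add_cancel]

end IsTwoSidedDoubling

/-- The kernel `κ` satisfies the natural size condition for `L^p(σ) → L^q(u)` bounds of its
potential `∫ h y * κ x y ∂σ`: at points `x, y` of a ball `B` whose radius is at most a fixed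
multiple of `dist x y`, one has `κ x y ≤ C / (u(B) ^ (1 / q) * σ(B) ^ (1 - 1 / p))`. The factor `4`
lets `B` be centred at a point at distance less than `dist x y` from `x`, rather than at `x`. -/
def HasBallSizeBound {X : Type*} [PseudoMetricSpace X] [MeasurableSpace X] (σ u : Measure X)
    (p q : ℝ) (κ : X → X → ℝ≥0∞) (C : ℝ≥0∞) : Prop :=
  ∀ ⦃z x y : X⦄ ⦃r : ℝ⦄, x ∈ ball z r → y ∈ ball z r → r ≤ 4 * dist x y →
    κ x y * (u (ball z r) ^ (1 / q) * σ (ball z r) ^ (1 - 1 / p)) ≤ C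

namespace HasBallSizeBound

variable {X : Type*} [PseudoMetricSpace X] [MeasurableSpace X] {σ u : Measure X} {p q : ℝ}
  {κ : X → X → ℝ≥0∞} {C : ℝ≥0∞}

lemma kernel_le (hκ : HasBallSizeBound σ u p q κ C) (hσ : IsTwoSidedDoubling σ)
    (hu : IsTwoSidedDoubling u) {x y z : X} {r : ℝ} (hx : x ∈ ball z r)
    (hy : y ∈ ball z r) (hr : r ≤ 4 * dist x y) :
    κ x y ≤ C * (u (ball z r) ^ (-(1 / q)) * σ (ball z r) ^ (-(1 - 1 / p))) := by
  have hr₀ := pos_of_mem_ball hx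
  have hu₀ := hu.ball_ne_zero z hr₀
  have hut := hu.ball_ne_top z hr₀
  have hσ₀ := hσ.ball_ne_zero z hr₀
  have hσt := hσ.ball_ne_top z hr₀
  calc κ x y = κ x y * (u (ball z r) ^ (1 / q) * σ (ball z r) ^ (1 - 1 / p)) *
        (u (ball z r) ^ (-(1 / q)) * σ (ball z r) ^ (-(1 - 1 / p))) := by
          rw [mul_assoc, mul_mul_mul_comm, ← ENNReal.rpow_add _ _ hu₀ hut,
            ← ENNReal.rpow_add _ _ hσ₀ hσt]
          simp
    _ ≤ C * (u (ball z r) ^ (-(1 / q)) * σ (ball z r) ^ (-(1 - 1 / p))) := by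
          gcongr
          exact hκ hx hy hr

lemma setLIntegral_mul_kernel_le (hκ : HasBallSizeBound σ u p q κ C) (hσ : IsTwoSidedDoubling σ)
    (hu : IsTwoSidedDoubling u) {h : X → ℝ≥0∞} (hm : Measurable h) {x z : X} {r : ℝ}
    (hx : x ∈ ball z r) {S : Set X} (hS : S ⊆ ball z r) (hr : ∀ y ∈ S, r ≤ 4 * dist x y) :
    ∫⁻ y in S, h y * κ x y ∂σ ≤
      C * (u (ball z r) ^ (-(1 / q)) * normalizedIntegral p h (σ.restrict (ball z r))) :=
  calc ∫⁻ y in S, h y * κ x y ∂σ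
    _ ≤ ∫⁻ y in S, h y * (C * (u (ball z r) ^ (-(1 / q)) * σ (ball z r) ^ (-(1 - 1 / p)))) ∂σ := by
      refine setLIntegral_mono (by fun_prop) fun y hy => ?_
      gcongr
      exact hκ.kernel_le hσ hu hx (hS hy) (hr y hy)
    _ ≤ ∫⁻ y in ball z r, h y *
          (C * (u (ball z r) ^ (-(1 / q)) * σ (ball z r) ^ (-(1 - 1 / p)))) ∂σ :=
      lintegral_mono_set hS
    _ = C * (u (ball z r) ^ (-(1 / q)) * normalizedIntegral p h (σ.restrict (ball z r))) := by
      rw [lintegral_mul_const _ hm, normalizedIntegral, Measure.restrict_apply_univ]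
      ring

lemma lintegral_mul_kernel_le_tsum (hκ : HasBallSizeBound σ u p q κ C)
    (hσ : IsTwoSidedDoubling σ) (hu : IsTwoSidedDoubling u) {h : X → ℝ≥0∞} (hm : Measurable h)
    (x : X) :
    ∫⁻ y, h y * κ x y ∂σ ≤ C * ∑' k : ℤ, u (ball x (2 ^ k)) ^ (-(1 / q)) *
      normalizedIntegral p h (σ.restrict (ball x (2 ^ k))) := by
  set annulus : ℤ → Set X := fun k => {y ∈ ball x (2 ^ k) | (2 : ℝ) ^ (k - 1) ≤ dist x y}
  have cover : {y | dist x y = 0}ᶜ ⊆ ⋃ k, annulus k := fun y hy => by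
    obtain ⟨k, hk, hk'⟩ := exists_mem_Ico_zpow (dist_nonneg.lt_of_ne' hy) one_lt_two
    exact mem_iUnion.2 ⟨k + 1, mem_ball'.2 hk', by simpa using hk⟩
  calc ∫⁻ y, h y * κ x y ∂σ
    _ = ∫⁻ y in {y | dist x y = 0}ᶜ, h y * κ x y ∂σ := by
      rw [Measure.restrict_eq_self_of_ae_mem]
      exact compl_mem_ae_iff.2 (hσ.measure_setOf_dist_eq_zero x)
    _ ≤ ∫⁻ y in ⋃ k, annulus k, h y * κ x y ∂σ := lintegral_mono_set cover
    _ ≤ ∑' k, ∫⁻ y in annulus k, h y * κ x y ∂σ := lintegral_iUnion_le _ _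
    _ ≤ ∑' k : ℤ, C * (u (ball x (2 ^ k)) ^ (-(1 / q)) *
          normalizedIntegral p h (σ.restrict (ball x (2 ^ k)))) := by
      refine ENNReal.tsum_le_tsum fun k => hκ.setLIntegral_mul_kernel_le hσ hu hm
        (mem_ball_self (by positivity)) (fun y hy => hy.1) fun y hy => ?_
      have hy' := hy.2
      rw [zpow_sub_one₀ two_ne_zero] at hy'
      linarith [dist_nonneg (x := x) (y := y)]
    _ = _ := ENNReal.tsum_mul_left

lemma rpow_lintegral_mul_kernel_le (hκ : HasBallSizeBound σ u p q κ C)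
    (hσ : IsTwoSidedDoubling σ) (hu : IsTwoSidedDoubling u) (hp : 1 ≤ p) {s : ℝ} (hs : 0 < s)
    (hsq : s < q) {h : X → ℝ≥0∞} (hm : Measurable h) (hJ : ∫⁻ y, h y ^ p ∂σ ≠ ⊤) {η : ℝ≥0∞}
    {x : X} (hη : IsLacunary η fun k : ℤ => u (ball x (2 ^ k))) :
    (∫⁻ y, h y * κ x y ∂σ) ^ q ≤
      C ^ q * lacunaryConst η (1 / s - 1 / q) (1 / q) ^ q * (∫⁻ y, h y ^ p ∂σ) ^ ((q - s) / p) *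
        ∑' k : ℤ, normalizedIntegral p h (σ.restrict (ball x (2 ^ k))) ^ s /
          u (ball x (2 ^ k)) := by
  have hq : 0 ≤ q := (hs.trans hsq).le
  refine (ENNReal.rpow_le_rpow (hκ.lintegral_mul_kernel_le_tsum hσ hu hm x) hq).trans ?_
  rw [ENNReal.mul_rpow_of_nonneg _ _ hq, mul_assoc, mul_assoc, ← one_div_mul_eq_div p,
    ENNReal.rpow_mul]
  gcongr
  refine hη.tsum_rpow_neg_mul_rpow_le (fun k => ?_) (by finiteness) hs hsq
  have two_zpow_pos : (0 : ℝ) < 2 ^ k := by positivity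
  refine (normalizedIntegral_le hm.aemeasurable hp (by simpa using hσ.ball_ne_zero x two_zpow_pos)
    (by simpa using hσ.ball_ne_top x two_zpow_pos)).trans ?_
  gcongr
  exact Measure.restrict_le_self

variable [OpensMeasurableSpace X] [SecondCountableTopology X]

lemma exists_lintegral_potential_rpow_le (hκ : HasBallSizeBound σ u p q κ C) (hC : C ≠ ⊤)
    (hσ : IsTwoSidedDoubling σ) (hu : IsTwoSidedDoubling u) (hp : 1 < p) (hpq : p < q) :
    ∃ K : ℝ≥0∞, K ≠ ⊤ ∧ ∀ {h : X → ℝ≥0∞}, Measurable h → ∫⁻ y, h y ^ p ∂σ ≠ ⊤ →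
      ∫⁻ x, (∫⁻ y, h y * κ x y ∂σ) ^ q ∂u ≤ K * (∫⁻ y, h y ^ p ∂σ) ^ (q / p) := by
  obtain ⟨s, hps, hsq⟩ := exists_between hpq
  have hp₀ : 0 < p := by linarith
  have hs₀ : 0 < s := by linarith
  have hq₀ : 0 < q := by linarith
  have hqs : 0 ≤ q - s := by linarith
  rcases isEmpty_or_nonempty X with _ | ⟨⟨z⟩⟩
  · exact ⟨0, ENNReal.zero_ne_top, by simp⟩
  obtain ⟨η, hη⟩ := hu.exists_isLacunary
  obtain ⟨K, hK, hle⟩ := hσ.exists_lintegral_tsum_normalizedIntegral_le hu hp hps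
  set L := lacunaryConst η (1 / s - 1 / q) (1 / q)
  have hL : L ≠ ⊤ := lacunaryConst_ne_top (hη z).ratio_lt_one
    (sub_pos.2 (one_div_lt_one_div_of_lt hs₀ hsq)) (by positivity)
  refine ⟨C ^ q * L ^ q * K, by finiteness, fun {h} hm hJ => ?_⟩
  set J := ∫⁻ y, h y ^ p ∂σ
  calc ∫⁻ x, (∫⁻ y, h y * κ x y ∂σ) ^ q ∂u
    _ ≤ ∫⁻ x, C ^ q * L ^ q * J ^ ((q - s) / p) *
          ∑' k : ℤ, normalizedIntegral p h (σ.restrict (ball x (2 ^ k))) ^ s /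
            u (ball x (2 ^ k)) ∂u :=
      lintegral_mono fun x => hκ.rpow_lintegral_mul_kernel_le hσ hu hp.le hs₀ hsq hm hJ (hη x)
    _ ≤ C ^ q * L ^ q * J ^ ((q - s) / p) * (K * J ^ (s / p)) := by
      rw [lintegral_const_mul' _ _ (by finiteness)]
      gcongr
      exact hle hm hJ
    _ = C ^ q * L ^ q * K * J ^ (q / p) := by
      rw [mul_mul_mul_comm, ← ENNReal.rpow_add_of_nonneg _ _ (div_nonneg hqs hp₀.le)
        (div_nonneg hs₀.le hp₀.le), ← add_div, sub_add_cancel]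

end HasBallSizeBound

section DyadicSum

variable {G : ℝ → ℝ≥0∞} {M c : ℝ≥0∞} {r : ℝ}

lemma le_mul_setLIntegral_Ioc_of_le (hr : 0 < r) (hM : M ≠ ⊤)
    (hc : ∀ t ∈ Ioc r (2 * r), c ≤ M * G t) :
    c ≤ 2 * M * ∫⁻ t in Ioc r (2 * r), G t * ENNReal.ofReal t⁻¹ := by
  have hvol : ∫⁻ _ in Ioc r (2 * r), c * ENNReal.ofReal (2 * r)⁻¹ = c * 2⁻¹ := by
    rw [setLIntegral_const, Real.volume_Ioc, mul_assoc, ← ENNReal.ofReal_mul (by positivity),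
      show (2 * r)⁻¹ * (2 * r - r) = 2⁻¹ by field_simp; ring,
      ENNReal.ofReal_inv_of_pos two_pos, ENNReal.ofReal_ofNat]
  calc c = 2 * (c * 2⁻¹) := by
        rw [mul_left_comm, ENNReal.mul_inv_cancel two_ne_zero ENNReal.ofNat_ne_top, mul_one]
    _ = 2 * ∫⁻ _ in Ioc r (2 * r), c * ENNReal.ofReal (2 * r)⁻¹ := by rw [hvol]
    _ ≤ 2 * ∫⁻ t in Ioc r (2 * r), M * (G t * ENNReal.ofReal t⁻¹) := by
        gcongr 2 * ?_
        refine setLIntegral_mono' measurableSet_Ioc fun t ht => ?_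
        rw [← mul_assoc]
        have ht₀ : 0 < t := hr.trans ht.1
        gcongr
        · exact hc t ht
        · exact ht.2
    _ = 2 * M * ∫⁻ t in Ioc r (2 * r), G t * ENNReal.ofReal t⁻¹ := by
        rw [lintegral_const_mul' _ _ hM, mul_assoc]

lemma tsum_two_pow_mul_le_setLIntegral_Ioi (hr : 0 < r) (hM : M ≠ ⊤)
    (hG : ∀ ⦃R t : ℝ⦄, 0 < R → t ∈ Ioc R (2 * R) → G R ≤ M * G t) :
    ∑' j : ℕ, G (2 ^ j * r) ≤ 2 * M * ∫⁻ t in Ioi r, G t * ENNReal.ofReal t⁻¹ := by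
  have hmono : Monotone fun j : ℕ => 2 ^ j * r := fun i j hij => by
    dsimp only
    gcongr
    exact one_le_two
  calc ∑' j : ℕ, G (2 ^ j * r)
    _ ≤ ∑' j : ℕ, 2 * M * ∫⁻ t in Ioc (2 ^ j * r) (2 ^ (j + 1) * r), G t * ENNReal.ofReal t⁻¹ := by
      refine ENNReal.tsum_le_tsum fun j => ?_
      have hpos : 0 < 2 ^ j * r := by positivity
      rw [pow_succ', mul_assoc 2 (2 ^ j) r]
      exact le_mul_setLIntegral_Ioc_of_le hpos hM fun t ht => hG hpos ht
    _ = 2 * M * ∫⁻ t in ⋃ j : ℕ, Ioc (2 ^ j * r) (2 ^ (j + 1) * r), G t * ENNReal.ofReal t⁻¹ := by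
      rw [ENNReal.tsum_mul_left, lintegral_iUnion (fun _ => measurableSet_Ioc)]
      exact hmono.pairwise_disjoint_on_Ioc_succ
    _ ≤ 2 * M * ∫⁻ t in Ioi r, G t * ENNReal.ofReal t⁻¹ := by
      gcongr
      refine iUnion_subset fun j t ht => lt_of_le_of_lt ?_ ht.1
      exact le_mul_of_one_le_left hr.le (one_le_pow₀ one_le_two)

end DyadicSum

/-- The quotient `‖h‖_{L^p(B, σ)} / u(B) ^ (1 / q)` for the ball `B = ball a t`. Guliyev's local
estimate bounds potentials of `h` near `a` by the integral of this function of `t` against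
`dt / t`. -/
noncomputable def localNormRatio {X : Type*} [PseudoMetricSpace X] [MeasurableSpace X]
    (σ u : Measure X) (p q : ℝ) (h : X → ℝ≥0∞) (a : X) (t : ℝ) : ℝ≥0∞ :=
  (∫⁻ y in ball a t, h y ^ p ∂σ) ^ (1 / p) * u (ball a t) ^ (-(1 / q))

section LocalNormRatio

variable {X : Type*} [PseudoMetricSpace X] [MeasurableSpace X] {σ u : Measure X} {p q : ℝ}
  {h : X → ℝ≥0∞} {a : X}

lemma localNormRatio_mul_rpow_measure_ball (hu : IsTwoSidedDoubling u) {t : ℝ} (ht : 0 < t) :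
    localNormRatio σ u p q h a t * u (ball a t) ^ (1 / q) =
      (∫⁻ y in ball a t, h y ^ p ∂σ) ^ (1 / p) := by
  rw [localNormRatio, mul_assoc,
    ← ENNReal.rpow_add _ _ (hu.ball_ne_zero a ht) (hu.ball_ne_top a ht), neg_add_cancel,
    ENNReal.rpow_zero, mul_one]

lemma localNormRatio_le_mul_of_measure_ball_le (hp : 0 ≤ p) (hq : 0 ≤ q) {D : ℝ≥0∞} (hD : D ≠ ⊤)
    {s t : ℝ} (hst : s ≤ t) (hle : u (ball a t) ≤ D * u (ball a s)) (ht : u (ball a t) ≠ 0) :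
    localNormRatio σ u p q h a s ≤ D ^ (1 / q) * localNormRatio σ u p q h a t := by
  have hD₀ : D ≠ 0 := fun hD₀ => ht (by simpa [hD₀] using hle)
  have hinv : u (ball a s) ^ (-(1 / q)) ≤ D ^ (1 / q) * u (ball a t) ^ (-(1 / q)) := by
    rw [ENNReal.rpow_neg, ENNReal.rpow_neg, ← div_eq_mul_inv, ENNReal.le_div_iff_mul_le
      (.inr (by simp [ENNReal.rpow_eq_zero_iff, hD₀, hD])) (.inr (by finiteness))]
    rw [← ENNReal.div_eq_inv_mul]
    refine ENNReal.div_le_of_le_mul ?_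
    rw [← ENNReal.mul_rpow_of_nonneg _ _ (by positivity)]
    gcongr
  calc localNormRatio σ u p q h a s
    _ ≤ (∫⁻ y in ball a t, h y ^ p ∂σ) ^ (1 / p) * (D ^ (1 / q) * u (ball a t) ^ (-(1 / q))) := by
      rw [localNormRatio]
      gcongr
    _ = D ^ (1 / q) * localNormRatio σ u p q h a t := mul_left_comm _ _ _

lemma IsTwoSidedDoubling.exists_tsum_localNormRatio_le (hu : IsTwoSidedDoubling u) (hp : 0 ≤ p)
    (hq : 0 ≤ q) :
    ∃ M : ℝ≥0∞, M ≠ ⊤ ∧ ∀ (h : X → ℝ≥0∞) (a : X) {r : ℝ}, 0 < r →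
      ∑' j : ℕ, localNormRatio σ u p q h a (2 ^ j * r) ≤
        M * ∫⁻ t in Ioi r, localNormRatio σ u p q h a t * ENNReal.ofReal t⁻¹ := by
  obtain ⟨D, hD, hle⟩ := hu.exists_doubling
  refine ⟨2 * D ^ (1 / q), by finiteness, fun h a r hr => ?_⟩
  refine tsum_two_pow_mul_le_setLIntegral_Ioi hr (by finiteness) fun R t hR ht => ?_
  exact localNormRatio_le_mul_of_measure_ball_le hp hq hD ht.1.le
    ((measure_mono (ball_subset_ball ht.2)).trans (hle a hR)) (hu.ball_ne_zero a (hR.trans ht.1))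

end LocalNormRatio

namespace HasBallSizeBound

variable {X : Type*} [PseudoMetricSpace X] [MeasurableSpace X]
  {σ u : Measure X} {p q : ℝ} {κ : X → X → ℝ≥0∞} {C : ℝ≥0∞}

lemma setLIntegral_compl_ball_mul_kernel_le (hκ : HasBallSizeBound σ u p q κ C)
    (hσ : IsTwoSidedDoubling σ) (hu : IsTwoSidedDoubling u) (hp : 1 ≤ p) {h : X → ℝ≥0∞}
    (hm : Measurable h) {a x : X} {r : ℝ} (hx : x ∈ ball a r) :
    ∫⁻ y in (ball a (2 * r))ᶜ, h y * κ x y ∂σ ≤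
      C * ∑' j : ℕ, localNormRatio σ u p q h a (2 ^ (j + 2) * r) := by
  have hr : 0 < r := pos_of_mem_ball hx
  set annulus : ℕ → Set X := fun j => ball a (2 ^ (j + 2) * r) \ ball a (2 ^ (j + 1) * r)
  have cover : (ball a (2 * r))ᶜ ⊆ ⋃ j, annulus j := fun y hy => by
    have hone : 1 ≤ dist y a / (2 * r) := by
      rw [one_le_div (by positivity)]
      simpa using hy
    obtain ⟨j, hj, hj'⟩ := exists_nat_pow_near hone one_lt_two
    rw [le_div_iff₀ (by positivity)] at hj
    rw [div_lt_iff₀ (by positivity)] at hj'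
    refine mem_iUnion.2 ⟨j, mem_ball.2 (hj'.trans_eq (by ring)), ?_⟩
    rw [mem_ball, not_lt]
    exact hj.trans_eq' (by ring)
  calc ∫⁻ y in (ball a (2 * r))ᶜ, h y * κ x y ∂σ
    _ ≤ ∫⁻ y in ⋃ j, annulus j, h y * κ x y ∂σ := lintegral_mono_set cover
    _ ≤ ∑' j, ∫⁻ y in annulus j, h y * κ x y ∂σ := lintegral_iUnion_le _ _
    _ ≤ ∑' j : ℕ, C * localNormRatio σ u p q h a (2 ^ (j + 2) * r) := by
      refine ENNReal.tsum_le_tsum fun j => ?_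
      have hpow : 1 ≤ (2 : ℝ) ^ j := one_le_pow₀ one_le_two
      have hR : 0 < 2 ^ (j + 2) * r := by positivity
      have hxR : x ∈ ball a (2 ^ (j + 2) * r) :=
        ball_subset_ball (by rw [pow_add]; nlinarith) hx
      refine (hκ.setLIntegral_mul_kernel_le hσ hu hm hxR sdiff_subset fun y hy => ?_).trans ?_
      · have hy' : 2 ^ (j + 1) * r ≤ dist y a := by simpa using hy.2
        rw [pow_succ] at hy'
        rw [pow_add]
        nlinarith [dist_triangle_left y a x, mem_ball.1 hx]
      · rw [localNormRatio, mul_comm (u _ ^ _)]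
        gcongr
        exact normalizedIntegral_le hm.aemeasurable hp (by simpa using hσ.ball_ne_zero a hR)
          (by simpa using hσ.ball_ne_top a hR)
    _ = _ := ENNReal.tsum_mul_left

variable [OpensMeasurableSpace X]

lemma lintegral_mul_kernel_le_setLIntegral_ball_add (hκ : HasBallSizeBound σ u p q κ C)
    (hσ : IsTwoSidedDoubling σ) (hu : IsTwoSidedDoubling u) (hp : 1 ≤ p) {h : X → ℝ≥0∞}
    (hm : Measurable h) {a x : X} {r : ℝ} (hx : x ∈ ball a r) :
    ∫⁻ y, h y * κ x y ∂σ ≤ ∫⁻ y in ball a (2 * r), h y * κ x y ∂σ +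
      C * ∑' j : ℕ, localNormRatio σ u p q h a (2 ^ j * r) := by
  rw [← lintegral_add_compl _ (measurableSet_ball (x := a) (ε := 2 * r))]
  gcongr
  refine (hκ.setLIntegral_compl_ball_mul_kernel_le hσ hu hp hm hx).trans ?_
  gcongr C * ?_
  exact ENNReal.tsum_comp_le_tsum_of_injective (add_left_injective 2)
    fun j => localNormRatio σ u p q h a (2 ^ j * r)

variable [SecondCountableTopology X]

lemma exists_rpow_lintegral_setLIntegral_ball_mul_kernel_le (hκ : HasBallSizeBound σ u p q κ C)
    (hC : C ≠ ⊤) (hσ : IsTwoSidedDoubling σ) (hu : IsTwoSidedDoubling u) (hp : 1 < p)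
    (hpq : p < q) :
    ∃ K : ℝ≥0∞, K ≠ ⊤ ∧ ∀ {h : X → ℝ≥0∞}, Measurable h → ∀ (a : X) {r : ℝ}, 0 < r →
      ∫⁻ y in ball a (2 * r), h y ^ p ∂σ ≠ ⊤ →
      (∫⁻ x, (∫⁻ y in ball a (2 * r), h y * κ x y ∂σ) ^ q ∂u) ^ (1 / q) ≤
        K * (localNormRatio σ u p q h a (2 * r) * u (ball a r) ^ (1 / q)) := by
  have hp₀ : 0 < p := by linarith
  have hq₀ : 0 < q := by linarith
  obtain ⟨K, hK, hle⟩ := hκ.exists_lintegral_potential_rpow_le hC hσ hu hp hpq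
  obtain ⟨D, hD, hdbl⟩ := hu.exists_doubling
  refine ⟨K ^ (1 / q) * D ^ (1 / q), by finiteness, fun {h} hm a r hr hfin => ?_⟩
  set B := ball a (2 * r)
  have hB : MeasurableSet B := measurableSet_ball
  have hpow : ∫⁻ y, B.indicator h y ^ p ∂σ = ∫⁻ y in B, h y ^ p ∂σ := by
    rw [← lintegral_indicator hB]
    exact lintegral_congr fun y => by by_cases hy : y ∈ B <;> simp [hy, hp₀]
  have hker (x : X) : ∫⁻ y, B.indicator h y * κ x y ∂σ = ∫⁻ y in B, h y * κ x y ∂σ := by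
    rw [← lintegral_indicator hB]
    exact lintegral_congr fun y => by by_cases hy : y ∈ B <;> simp [hy]
  have hstrong := hle (hm.indicator hB) (hpow ▸ hfin)
  simp only [hpow, hker] at hstrong
  calc (∫⁻ x, (∫⁻ y in B, h y * κ x y ∂σ) ^ q ∂u) ^ (1 / q)
    _ ≤ (K * (∫⁻ y in B, h y ^ p ∂σ) ^ (q / p)) ^ (1 / q) := by gcongr
    _ = K ^ (1 / q) * (localNormRatio σ u p q h a (2 * r) * u B ^ (1 / q)) := by
      rw [localNormRatio_mul_rpow_measure_ball hu (by positivity),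
        ENNReal.mul_rpow_of_nonneg _ _ (by positivity), ← ENNReal.rpow_mul,
        show q / p * (1 / q) = 1 / p by field_simp]
    _ ≤ K ^ (1 / q) * (localNormRatio σ u p q h a (2 * r) * (D * u (ball a r)) ^ (1 / q)) := by
      gcongr
      exact hdbl a hr
    _ = K ^ (1 / q) * D ^ (1 / q) *
          (localNormRatio σ u p q h a (2 * r) * u (ball a r) ^ (1 / q)) := by
      rw [ENNReal.mul_rpow_of_nonneg _ _ (by positivity)]
      ring

lemma exists_rpow_setLIntegral_potential_le (hκ : HasBallSizeBound σ u p q κ C) (hC : C ≠ ⊤)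
    (hσ : IsTwoSidedDoubling σ) (hu : IsTwoSidedDoubling u) (hp : 1 < p) (hpq : p < q)
    (hκm : Measurable fun z : X × X => κ z.1 z.2) :
    ∃ K : ℝ≥0∞, K ≠ ⊤ ∧ ∀ {h : X → ℝ≥0∞}, Measurable h →
      (∀ (a : X) {r : ℝ}, 0 < r → ∫⁻ y in ball a r, h y ^ p ∂σ ≠ ⊤) → ∀ (a : X) {r : ℝ}, 0 < r →
      (∫⁻ x in ball a r, (∫⁻ y, h y * κ x y ∂σ) ^ q ∂u) ^ (1 / q) ≤
        K * u (ball a r) ^ (1 / q) *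
          ∫⁻ t in Ioi r, localNormRatio σ u p q h a t * ENNReal.ofReal t⁻¹ := by
  have hq₀ : 0 < q := by linarith
  obtain ⟨K, hK, hnear⟩ :=
    hκ.exists_rpow_lintegral_setLIntegral_ball_mul_kernel_le hC hσ hu hp hpq
  obtain ⟨M, hM, hsum⟩ := hu.exists_tsum_localNormRatio_le (σ := σ) (by linarith : 0 ≤ p) hq₀.le
  refine ⟨(K + C) * M, by finiteness, fun {h} hm hfin a r hr => ?_⟩
  set near : X → ℝ≥0∞ := fun x => ∫⁻ y in ball a (2 * r), h y * κ x y ∂σ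
  set S := ∑' j : ℕ, localNormRatio σ u p q h a (2 ^ j * r)
  have hnear_meas : Measurable near :=
    have := hσ.sigmaFinite
    ((hm.comp measurable_snd).mul hκm).lintegral_prod_right'
  calc (∫⁻ x in ball a r, (∫⁻ y, h y * κ x y ∂σ) ^ q ∂u) ^ (1 / q)
    _ ≤ (∫⁻ x in ball a r, (near x + C * S) ^ q ∂u) ^ (1 / q) := by
      gcongr ?_ ^ _
      refine setLIntegral_mono' measurableSet_ball fun _ hx => ?_
      gcongr
      exact hκ.lintegral_mul_kernel_le_setLIntegral_ball_add hσ hu hp.le hm hx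
    _ ≤ (∫⁻ x in ball a r, near x ^ q ∂u) ^ (1 / q) +
          (∫⁻ _ in ball a r, (C * S) ^ q ∂u) ^ (1 / q) :=
      ENNReal.lintegral_Lp_add_le hnear_meas.aemeasurable aemeasurable_const (by linarith)
    _ ≤ K * (S * u (ball a r) ^ (1 / q)) + C * S * u (ball a r) ^ (1 / q) := by
      gcongr
      · refine (ENNReal.rpow_le_rpow (setLIntegral_le_lintegral _ _) (by positivity)).trans
          ((hnear hm a hr (hfin a (by positivity))).trans ?_)
        gcongr
        simpa using ENNReal.le_tsum (f := fun j : ℕ => localNormRatio σ u p q h a (2 ^ j * r)) 1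
      · rw [setLIntegral_const, ENNReal.mul_rpow_of_nonneg _ _ (by positivity), ← ENNReal.rpow_mul,
          mul_one_div_cancel hq₀.ne', ENNReal.rpow_one]
    _ = (K + C) * u (ball a r) ^ (1 / q) * S := by ring
    _ ≤ (K + C) * u (ball a r) ^ (1 / q) *
          (M * ∫⁻ t in Ioi r, localNormRatio σ u p q h a t * ENNReal.ofReal t⁻¹) := by
      gcongr
      exact hsum h a hr
    _ = _ := by ring

end HasBallSizeBound

section SDiff

variable {X : Type*} [MeasurableSpace X] {μ : Measure X} {E B : Set X}

lemma measure_le_inv_one_sub_mul_measure_sdiff (hB : μ B ≠ ⊤) {η : ℝ≥0∞} (hη : η < 1)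
    (hle : μ E ≤ η * μ B) : μ B ≤ (1 - η)⁻¹ * μ (B \ E) := by
  rw [← ENNReal.mul_le_iff_le_inv (tsub_pos_of_lt hη).ne' (by finiteness)]
  calc (1 - η) * μ B = μ B - η * μ B := by rw [ENNReal.sub_mul fun _ _ => hB, one_mul]
    _ ≤ μ B - μ E := tsub_le_tsub_left hle _
    _ ≤ μ (B \ E) := le_measure_sdiff

lemma measure_le_one_sub_inv_mul_of_measure_le_sdiff (hB₀ : μ B ≠ 0) (hB : μ B ≠ ⊤)
    (hE : MeasurableSet E) (hEB : E ⊆ B) {δ : ℝ≥0∞} (hle : μ B ≤ δ * μ (B \ E)) :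
    μ E ≤ (1 - δ⁻¹) * μ B := by
  have hδ : δ ≠ 0 := fun hδ => hB₀ (by simpa [hδ] using hle)
  rw [ENNReal.sub_mul fun _ _ => hB, one_mul]
  refine ENNReal.le_sub_of_add_le_right (by finiteness) ?_
  calc μ E + δ⁻¹ * μ B ≤ μ E + μ (B \ E) := by
        gcongr
        rw [← ENNReal.div_eq_inv_mul]
        exact ENNReal.div_le_of_le_mul' hle
    _ = μ B := by rw [← measure_inter_add_sdiff B hE, inter_eq_self_of_subset_right hEB]

end SDiff

/-- The measures `u` and `σ` satisfy a Muckenhoupt condition relative to the base measure `μ`: the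
product `u(E) ^ a * σ(E) ^ b` is always at least `μ(E) ^ (a + b)`, and on balls it is at most `C`
times that. Densities with `φ ^ a * ψ ^ b = 1` satisfy the first condition by Hölder's inequality,
so that for them the second one is the `A_{p,q}` condition, with `a = 1 / q` and `b = 1 / p'`. -/
structure IsMuckenhouptPair {X : Type*} [PseudoMetricSpace X] [MeasurableSpace X]
    (μ u σ : Measure X) (a b : ℝ) (C : ℝ≥0∞) : Prop where
  rpow_measure_le : ∀ {E : Set X}, MeasurableSet E → μ E ^ (a + b) ≤ u E ^ a * σ E ^ b
  rpow_measure_ball_mul_le : ∀ (x : X) {r : ℝ}, 0 < r →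
    u (ball x r) ^ a * σ (ball x r) ^ b ≤ C * μ (ball x r) ^ (a + b)

namespace IsMuckenhouptPair

variable {X : Type*} [PseudoMetricSpace X] [MeasurableSpace X] {μ u σ : Measure X} {a b : ℝ}
  {C : ℝ≥0∞}

lemma symm (h : IsMuckenhouptPair μ u σ a b C) : IsMuckenhouptPair μ σ u b a C where
  rpow_measure_le hE := by
    rw [add_comm, mul_comm]
    exact h.rpow_measure_le hE
  rpow_measure_ball_mul_le x r hr := by
    rw [add_comm, mul_comm]
    exact h.rpow_measure_ball_mul_le x hr

variable [OpensMeasurableSpace X]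

lemma measure_ball_ne_zero (h : IsMuckenhouptPair μ u σ a b C) (ha : 0 < a) (hb : 0 < b)
    (hμ : IsTwoSidedDoubling μ) (x : X) {r : ℝ} (hr : 0 < r) : u (ball x r) ≠ 0 := fun hu => by
  have hle := h.rpow_measure_le (measurableSet_ball (x := x) (ε := r))
  rw [hu, ENNReal.zero_rpow_of_pos ha, zero_mul, nonpos_iff_eq_zero, ENNReal.rpow_eq_zero_iff_of_pos
    (by positivity)] at hle
  exact hμ.ball_ne_zero x hr hle

lemma measure_ball_ne_top (h : IsMuckenhouptPair μ u σ a b C) (ha : 0 < a) (hb : 0 < b)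
    (hC : C ≠ ⊤) (hμ : IsTwoSidedDoubling μ) (x : X) {r : ℝ} (hr : 0 < r) :
    u (ball x r) ≠ ⊤ := fun hu => by
  have hσ := h.symm.measure_ball_ne_zero hb ha hμ x hr
  have hμt := hμ.ball_ne_top x hr
  have hle := h.rpow_measure_ball_mul_le x hr
  rw [hu, ENNReal.top_rpow_of_pos ha,
    ENNReal.top_mul (by simp [ENNReal.rpow_eq_zero_iff_of_pos hb, hσ]), top_le_iff] at hle
  exact (by finiteness : C * μ (ball x r) ^ (a + b) ≠ ⊤) hle

lemma measure_ball_le_mul_of_subset (h : IsMuckenhouptPair μ u σ a b C) (ha : 0 < a) (hb : 0 < b)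
    (hC : C ≠ ⊤) (hμ : IsTwoSidedDoubling μ) {x : X} {r : ℝ} (hr : 0 < r) {E : Set X}
    (hE : MeasurableSet E) (hsub : E ⊆ ball x r) {c : ℝ≥0∞} (hle : μ (ball x r) ≤ c * μ E) :
    u (ball x r) ≤ (C * c ^ (a + b)) ^ (1 / a) * u E := by
  have hab : 0 ≤ a + b := by positivity
  have hσ₀ := h.symm.measure_ball_ne_zero hb ha hμ x hr
  have hσ := h.symm.measure_ball_ne_top hb ha hC hμ x hr
  have hmul : u (ball x r) ^ a * σ (ball x r) ^ b ≤
      C * c ^ (a + b) * u E ^ a * σ (ball x r) ^ b :=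
    calc u (ball x r) ^ a * σ (ball x r) ^ b
      _ ≤ C * μ (ball x r) ^ (a + b) := h.rpow_measure_ball_mul_le x hr
      _ ≤ C * (c * μ E) ^ (a + b) := by gcongr
      _ = C * c ^ (a + b) * μ E ^ (a + b) := by
        rw [ENNReal.mul_rpow_of_nonneg _ _ hab, mul_assoc]
      _ ≤ C * c ^ (a + b) * (u E ^ a * σ E ^ b) := by
        gcongr
        exact h.rpow_measure_le hE
      _ ≤ C * c ^ (a + b) * u E ^ a * σ (ball x r) ^ b := by
        rw [mul_assoc _ (u E ^ a)]
        gcongr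
  have hrpow : u (ball x r) ^ a ≤ C * c ^ (a + b) * u E ^ a :=
    (ENNReal.mul_le_mul_iff_left (by simp [ENNReal.rpow_eq_zero_iff_of_pos hb, hσ₀])
      (by finiteness)).1 hmul
  calc u (ball x r) = (u (ball x r) ^ a) ^ (1 / a) := by
        rw [← ENNReal.rpow_mul, mul_one_div_cancel ha.ne', ENNReal.rpow_one]
    _ ≤ (C * c ^ (a + b) * u E ^ a) ^ (1 / a) := by gcongr
    _ = (C * c ^ (a + b)) ^ (1 / a) * u E := by
        rw [ENNReal.mul_rpow_of_nonneg _ _ (by positivity), ← ENNReal.rpow_mul (u E),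
          mul_one_div_cancel ha.ne', ENNReal.rpow_one]

lemma isTwoSidedDoubling (h : IsMuckenhouptPair μ u σ a b C) (ha : 0 < a) (hb : 0 < b)
    (hC : C ≠ ⊤) (hμ : IsTwoSidedDoubling μ) : IsTwoSidedDoubling u := by
  have hu₀ := h.measure_ball_ne_zero ha hb hμ
  have hu := h.measure_ball_ne_top ha hb hC hμ
  have hsub (x : X) {r : ℝ} (hr : 0 < r) : ball x r ⊆ ball x (2 * r) :=
    ball_subset_ball (by linarith)
  refine ⟨hu₀, hu, ?_, ?_⟩
  · obtain ⟨D, hD, hle⟩ := hμ.exists_doubling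
    exact ⟨_, by finiteness, fun x r hr => h.measure_ball_le_mul_of_subset ha hb hC hμ
      (by positivity) measurableSet_ball (hsub x hr) (hle x hr)⟩
  · obtain ⟨η, hη, hle⟩ := hμ.exists_reverse_doubling
    have hinv : (1 - η)⁻¹ ≠ ⊤ := ENNReal.inv_ne_top.2 (tsub_pos_of_lt hη).ne'
    set δ := (C * (1 - η)⁻¹ ^ (a + b)) ^ (1 / a)
    have hδ : δ ≠ ⊤ := by finiteness
    refine ⟨1 - δ⁻¹, ENNReal.sub_lt_self (by simp) (by simp) (by simpa), fun x r hr => ?_⟩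
    have hr' : 0 < 2 * r := by positivity
    exact measure_le_one_sub_inv_mul_of_measure_le_sdiff (hu₀ x hr') (hu x hr') measurableSet_ball
      (hsub x hr) <| h.measure_ball_le_mul_of_subset ha hb hC hμ hr'
        (measurableSet_ball.diff measurableSet_ball) sdiff_subset <|
        measure_le_inv_one_sub_mul_measure_sdiff (hμ.ball_ne_top x hr') hη (hle x hr)

end IsMuckenhouptPair

/-- The kernel `1 / dist x y ^ β` of the fractional integral, equal to `⊤` on the diagonal when
`β ≠ 0`. -/
noncomputable def rieszKernel {X : Type*} [PseudoMetricSpace X] (β : ℝ) (x y : X) : ℝ≥0∞ :=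
  (ENNReal.ofReal (dist x y ^ β))⁻¹

lemma measurable_rieszKernel {X : Type*} [PseudoMetricSpace X] [MeasurableSpace X]
    [OpensMeasurableSpace X] [SecondCountableTopology X] (β : ℝ) :
    Measurable fun z : X × X => rieszKernel β z.1 z.2 :=
  ((measurable_dist.pow_const β).ennreal_ofReal).inv

section AddHaar

open Module

variable {E : Type*} [NormedAddCommGroup E] [NormedSpace ℝ E] [FiniteDimensional ℝ E]
  [MeasurableSpace E] [BorelSpace E] (μ : Measure E) [μ.IsAddHaarMeasure]

lemma isTwoSidedDoubling_addHaar [Nontrivial E] : IsTwoSidedDoubling μ := by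
  have hdbl (x : E) (r : ℝ) : μ (ball x (2 * r)) = 2 ^ finrank ℝ E * μ (ball x r) := by
    rw [Measure.addHaar_ball_mul_of_pos μ x two_pos, Measure.addHaar_ball_center μ x,
      ENNReal.ofReal_pow zero_le_two, ENNReal.ofReal_ofNat]
  have hpow : (2 ^ finrank ℝ E : ℝ≥0∞) ≠ 0 := by positivity
  refine ⟨fun x r hr => (measure_ball_pos μ x hr).ne', fun x r _ => measure_ball_lt_top.ne,
    ⟨_, by finiteness, fun x r _ => (hdbl x r).le⟩, (2 ^ finrank ℝ E)⁻¹, ?_, fun x r _ => ?_⟩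
  · exact ENNReal.inv_lt_one.2 (one_lt_pow₀ ENNReal.one_lt_two finrank_pos.ne')
  · rw [hdbl, ENNReal.inv_mul_cancel_left hpow (by finiteness)]

lemma IsMuckenhouptPair.hasBallSizeBound_rieszKernel {u σ : Measure E} {p q : ℝ} {C : ℝ≥0∞}
    (h : IsMuckenhouptPair μ u σ (1 / q) (1 - 1 / p) C) (hpq : 0 ≤ 1 / q + (1 - 1 / p)) :
    HasBallSizeBound σ u p q (rieszKernel (finrank ℝ E * (1 / q + (1 - 1 / p))))
      (C * μ (ball 0 4) ^ (1 / q + (1 - 1 / p))) := by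
  intro z x y r hx _ hr
  have hr₀ : 0 < r := pos_of_mem_ball hx
  have hdist : 0 < dist x y := by linarith
  set θ := 1 / q + (1 - 1 / p)
  have hball : μ (ball z r) ^ θ ≤
      ENNReal.ofReal (dist x y ^ (finrank ℝ E * θ)) * μ (ball 0 4) ^ θ :=
    calc μ (ball z r) ^ θ ≤ μ (ball z (dist x y * 4)) ^ θ := by
          gcongr
          linarith
      _ = ENNReal.ofReal (dist x y ^ (finrank ℝ E * θ)) * μ (ball 0 4) ^ θ := by
          rw [Measure.addHaar_ball_mul_of_pos μ z hdist, ENNReal.mul_rpow_of_nonneg _ _ hpq,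
            ENNReal.ofReal_rpow_of_nonneg (by positivity) hpq, ← Real.rpow_natCast,
            ← Real.rpow_mul hdist.le]
  calc rieszKernel (finrank ℝ E * θ) x y * (u (ball z r) ^ (1 / q) * σ (ball z r) ^ (1 - 1 / p))
    _ ≤ rieszKernel (finrank ℝ E * θ) x y *
          (C * (ENNReal.ofReal (dist x y ^ (finrank ℝ E * θ)) * μ (ball 0 4) ^ θ)) := by
      gcongr rieszKernel _ x y * ?_
      refine (h.rpow_measure_ball_mul_le z hr₀).trans ?_
      gcongr
    _ = C * μ (ball 0 4) ^ θ := by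
      rw [rieszKernel, mul_left_comm C, ENNReal.inv_mul_cancel_left (by simpa using by positivity)
        ENNReal.ofReal_ne_top]

end AddHaar

/-- The measure `w ^ e dμ`. -/
noncomputable def weightMeasure {X : Type*} [MeasurableSpace X] (μ : Measure X) (w : X → ℝ)
    (e : ℝ) : Measure X :=
  μ.withDensity fun x => ENNReal.ofReal (w x ^ e)

/-- The density of `|f| dμ` with respect to `w ^ (-e) dμ`. With `e = p'`, it turns `L^p(w ^ p)`
norms of `f` into `L^p` norms with respect to the measure `w ^ (-p') dμ`. -/
noncomputable def dualDensity {X : Type*} (w : X → ℝ) (e : ℝ) (f : X → ℝ) (x : X) : ℝ≥0∞ :=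
  ENNReal.ofReal |f x| * ENNReal.ofReal (w x ^ e)

section WeightMeasure

variable {X : Type*} [MeasurableSpace X] {μ : Measure X} {w f : X → ℝ} {s t : ℝ}

lemma weightMeasure_apply (e : ℝ) {E : Set X} (hE : MeasurableSet E) :
    weightMeasure μ w e E = ∫⁻ x in E, ENNReal.ofReal (w x ^ e) ∂μ :=
  withDensity_apply _ hE

lemma weightMeasure_restrict (e : ℝ) {E : Set X} (hE : MeasurableSet E) :
    (weightMeasure μ w e).restrict E = weightMeasure (μ.restrict E) w e :=
  restrict_withDensity hE _

lemma lintegral_weightMeasure (hw : Measurable w) (e : ℝ) (g : X → ℝ≥0∞) :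
    ∫⁻ x, g x ∂weightMeasure μ w e = ∫⁻ x, ENNReal.ofReal (w x ^ e) * g x ∂μ :=
  lintegral_withDensity_eq_lintegral_mul_non_measurable _ (hw.pow_const e).ennreal_ofReal (by simp)
    g

lemma weightMeasure_le_add (hw : ∀ x, 0 ≤ w x) (hs : 0 ≤ s) (hst : s ≤ t) {E : Set X}
    (hE : MeasurableSet E) : weightMeasure μ w s E ≤ μ E + weightMeasure μ w t E := by
  have hpow (x : X) : w x ^ s ≤ 1 + w x ^ t := by
    rcases le_total (w x) 1 with h | h
    · linarith [Real.rpow_le_one (hw x) h hs, Real.rpow_nonneg (hw x) t]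
    · linarith [Real.rpow_le_rpow_of_exponent_le h hst]
  rw [weightMeasure_apply s hE, weightMeasure_apply t hE]
  calc ∫⁻ x in E, ENNReal.ofReal (w x ^ s) ∂μ
    _ ≤ ∫⁻ x in E, (1 + ENNReal.ofReal (w x ^ t)) ∂μ := lintegral_mono fun x =>
      (ENNReal.ofReal_le_ofReal (hpow x)).trans (by simpa using ENNReal.ofReal_add_le (p := 1))
    _ = μ E + ∫⁻ x in E, ENNReal.ofReal (w x ^ t) ∂μ := by
      rw [lintegral_add_left measurable_const, setLIntegral_one]

lemma rpow_measure_le_weightMeasure_mul (hw : Measurable w) (hpos : ∀ᵐ x ∂μ, 0 < w x) {a b : ℝ}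
    (ha : 0 < a) (hb : 0 < b) (hst : s * a + t * b = 0) {E : Set X} (hE : MeasurableSet E) :
    μ E ^ (a + b) ≤ weightMeasure μ w s E ^ a * weightMeasure μ w t E ^ b := by
  have hab : 0 < a + b := by positivity
  have hone : ∀ᵐ x ∂μ, ENNReal.ofReal (w x ^ s) ^ (a / (a + b)) *
      ENNReal.ofReal (w x ^ t) ^ (b / (a + b)) = 1 := by
    filter_upwards [hpos] with x hx
    rw [ENNReal.ofReal_rpow_of_pos (by positivity), ENNReal.ofReal_rpow_of_pos (by positivity),
      ← ENNReal.ofReal_mul (by positivity), ← Real.rpow_mul hx.le, ← Real.rpow_mul hx.le,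
      ← Real.rpow_add hx, mul_div_assoc', mul_div_assoc', ← add_div, hst]
    simp
  have hmeas (e : ℝ) : Measurable fun x => ENNReal.ofReal (w x ^ e) :=
    (hw.pow_const e).ennreal_ofReal
  have holder : μ E ≤ weightMeasure μ w s E ^ (a / (a + b)) *
      weightMeasure μ w t E ^ (b / (a + b)) := by
    rw [weightMeasure_apply s hE, weightMeasure_apply t hE, ← setLIntegral_one,
      ← lintegral_congr_ae (ae_restrict_of_ae hone)]
    exact ENNReal.lintegral_mul_norm_pow_le (hmeas s).aemeasurable (hmeas t).aemeasurable
      (by positivity) (by positivity) (by field_simp)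
  refine (ENNReal.rpow_le_rpow holder hab.le).trans_eq ?_
  rw [ENNReal.mul_rpow_of_nonneg _ _ hab.le, ← ENNReal.rpow_mul, ← ENNReal.rpow_mul,
    div_mul_cancel₀ a hab.ne', div_mul_cancel₀ b hab.ne']

lemma measurable_dualDensity (hw : Measurable w) (e : ℝ) (hf : Measurable f) :
    Measurable (dualDensity w e f) :=
  hf.abs.ennreal_ofReal.mul (hw.pow_const e).ennreal_ofReal

lemma lintegral_dualDensity_mul (hw : Measurable w) (hpos : ∀ᵐ x ∂μ, 0 < w x) (e : ℝ)
    (g : X → ℝ≥0∞) :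
    ∫⁻ x, dualDensity w e f x * g x ∂weightMeasure μ w (-e) =
      ∫⁻ x, ENNReal.ofReal |f x| * g x ∂μ := by
  rw [lintegral_weightMeasure hw]
  refine lintegral_congr_ae (hpos.mono fun x hx => ?_)
  have hone : ENNReal.ofReal (w x ^ (-e)) * ENNReal.ofReal (w x ^ e) = 1 := by
    rw [← ENNReal.ofReal_mul (by positivity), ← Real.rpow_add hx]
    simp
  calc ENNReal.ofReal (w x ^ (-e)) * (ENNReal.ofReal |f x| * ENNReal.ofReal (w x ^ e) * g x)
    _ = ENNReal.ofReal (w x ^ (-e)) * ENNReal.ofReal (w x ^ e) *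
          (ENNReal.ofReal |f x| * g x) := by ring
    _ = ENNReal.ofReal |f x| * g x := by rw [hone, one_mul]

lemma lintegral_dualDensity_rpow (hw : Measurable w) (hpos : ∀ᵐ x ∂μ, 0 < w x) {p e : ℝ}
    (hp : 0 ≤ p) (he : -e + e * p = p) :
    ∫⁻ x, dualDensity w e f x ^ p ∂weightMeasure μ w (-e) =
      ∫⁻ x, ENNReal.ofReal |f x| ^ p * ENNReal.ofReal (w x ^ p) ∂μ := by
  rw [lintegral_weightMeasure hw]
  refine lintegral_congr_ae (hpos.mono fun x hx => ?_)
  have hexp : ENNReal.ofReal (w x ^ (-e)) * ENNReal.ofReal (w x ^ e) ^ p =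
      ENNReal.ofReal (w x ^ p) := by
    rw [ENNReal.ofReal_rpow_of_pos (by positivity), ← ENNReal.ofReal_mul (by positivity),
      ← Real.rpow_mul hx.le, ← Real.rpow_add hx, he]
  calc ENNReal.ofReal (w x ^ (-e)) * (ENNReal.ofReal |f x| * ENNReal.ofReal (w x ^ e)) ^ p
    _ = ENNReal.ofReal |f x| ^ p *
          (ENNReal.ofReal (w x ^ (-e)) * ENNReal.ofReal (w x ^ e) ^ p) := by
      rw [ENNReal.mul_rpow_of_nonneg _ _ hp, mul_left_comm]
    _ = ENNReal.ofReal |f x| ^ p * ENNReal.ofReal (w x ^ p) := by rw [hexp]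

end WeightMeasure

section Muckenhoupt

variable {n : ℕ} {p q p' : ℝ} {w : EuclideanSpace ℝ (Fin n) → ℝ}

lemma wSet_eq_weightMeasure (w : EuclideanSpace ℝ (Fin n) → ℝ) (e : ℝ)
    {E : Set (EuclideanSpace ℝ (Fin n))} (hE : MeasurableSet E) :
    wSet (fun x => w x ^ e) E = weightMeasure volume w e E :=
  (weightMeasure_apply e hE).symm

lemma wLp_eq_lintegral_dualDensity (hw : Measurable w) (hpos : ∀ᵐ x, 0 < w x) (hp : 0 ≤ p)
    (hpp' : -p' + p' * p = p) (f : EuclideanSpace ℝ (Fin n) → ℝ)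
    {E : Set (EuclideanSpace ℝ (Fin n))} (hE : MeasurableSet E) :
    wLp p (fun x => w x ^ p) f E =
      (∫⁻ x in E, dualDensity w p' f x ^ p ∂weightMeasure volume w (-p')) ^ (1 / p) := by
  rw [weightMeasure_restrict _ hE,
    lintegral_dualDensity_rpow hw (ae_restrict_of_ae hpos) hp hpp', wLp]

lemma wLpE_eq_lintegral_weightMeasure (hw : Measurable w) (q : ℝ)
    (g : EuclideanSpace ℝ (Fin n) → ℝ≥0∞) {E : Set (EuclideanSpace ℝ (Fin n))}
    (hE : MeasurableSet E) :
    wLpE q (fun x => w x ^ q) g E = (∫⁻ x in E, g x ^ q ∂weightMeasure volume w q) ^ (1 / q) := by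
  rw [weightMeasure_restrict _ hE, lintegral_weightMeasure hw, wLpE]
  simp only [mul_comm]

lemma fracIntE_eq_lintegral_dualDensity (hw : Measurable w) (hpos : ∀ᵐ x, 0 < w x) (α p' : ℝ)
    (f : EuclideanSpace ℝ (Fin n) → ℝ) (x : EuclideanSpace ℝ (Fin n)) :
    fracIntE α f x =
      ∫⁻ y, dualDensity w p' f y * rieszKernel (n - α) x y ∂weightMeasure volume w (-p') :=
  (lintegral_dualDensity_mul hw hpos p' _).symm

lemma MuckApq.exists_isMuckenhouptPair (h : MuckApq p q p' w) (hw : Measurable w)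
    (hpos : ∀ᵐ x, 0 < w x) (hq : 0 < q) (hp' : 0 < p') :
    ∃ C : ℝ≥0∞, C ≠ ⊤ ∧ IsMuckenhouptPair volume (weightMeasure volume w q)
      (weightMeasure volume w (-p')) (1 / q) (1 / p') C := by
  obtain ⟨C, -, hle⟩ := h
  refine ⟨ENNReal.ofReal C, ENNReal.ofReal_ne_top, fun hE => ?_, fun x r hr => ?_⟩
  · exact rpow_measure_le_weightMeasure_mul hw hpos (by positivity) (by positivity)
      (by field_simp; ring) hE
  · have hV₀ : volume (ball x r) ≠ 0 := (measure_ball_pos volume x hr).ne'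
    have hV : volume (ball x r) ≠ ⊤ := measure_ball_lt_top.ne
    have hballs := hle x r hr
    rwa [← weightMeasure_apply q measurableSet_ball, ← weightMeasure_apply (-p') measurableSet_ball,
      ENNReal.mul_rpow_of_nonneg _ _ (by positivity),
      ENNReal.mul_rpow_of_nonneg _ _ (by positivity),
      mul_mul_mul_comm, ENNReal.inv_rpow, ENNReal.inv_rpow,
      ← ENNReal.mul_inv (.inr (by finiteness)) (.inl (by finiteness)),
      ← ENNReal.rpow_add _ _ hV₀ hV, ENNReal.inv_mul_le_iff
        (by simp [ENNReal.rpow_eq_zero_iff, hV₀, hV]) (by finiteness),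
      mul_comm (volume _ ^ _)] at hballs

end Muckenhoupt

section Morrey

variable {n : ℕ} {p q p' α : ℝ} {v w f : EuclideanSpace ℝ (Fin n) → ℝ}
  {ψ : EuclideanSpace ℝ (Fin n) → ℝ → ℝ}

lemma MuckApq.exists_rpow_setLIntegral_rieszPotential_le [NeZero n] (h : MuckApq p q p' w)
    (hw : Measurable w) (hpos : ∀ᵐ x, 0 < w x) (hp : 1 < p) (hpq : p < q)
    (hp' : 1 / p + 1 / p' = 1) :
    ∃ K : ℝ≥0∞, K ≠ ⊤ ∧ ∀ {g}, Measurable g →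
      (∀ a {r}, 0 < r → ∫⁻ y in ball a r, g y ^ p ∂weightMeasure volume w (-p') ≠ ⊤) →
      ∀ a {r}, 0 < r →
      (∫⁻ x in ball a r, (∫⁻ y, g y * rieszKernel (n * (1 / q + 1 / p')) x y
        ∂weightMeasure volume w (-p')) ^ q ∂weightMeasure volume w q) ^ (1 / q) ≤
        K * weightMeasure volume w q (ball a r) ^ (1 / q) *
          ∫⁻ t in Ioi r, localNormRatio (weightMeasure volume w (-p')) (weightMeasure volume w q)
            p q g a t * ENNReal.ofReal t⁻¹ := by
  have hp₀ : 0 < p := by positivity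
  have hq₀ : 0 < q := hp₀.trans hpq
  have hp'₀ : 0 < p' := by
    have : 1 / p < 1 := (div_lt_one hp₀).2 hp
    exact one_div_pos.1 (by linarith)
  have hθ : 0 ≤ 1 / q + 1 / p' := by positivity
  obtain ⟨C, hC, hpair⟩ := h.exists_isMuckenhouptPair hw hpos hq₀ hp'₀
  have hvol := isTwoSidedDoubling_addHaar (volume : Measure (EuclideanSpace ℝ (Fin n)))
  have hu := hpair.isTwoSidedDoubling (by positivity) (by positivity) hC hvol
  have hσ := hpair.symm.isTwoSidedDoubling (by positivity) (by positivity) hC hvol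
  rw [eq_sub_iff_add_eq'.2 hp'] at hpair hθ ⊢
  have hκ := hpair.hasBallSizeBound_rieszKernel volume hθ
  rw [finrank_euclideanSpace_fin] at hκ
  exact hκ.exists_rpow_setLIntegral_potential_le (by finiteness) hσ hu hp hpq
    (measurable_rieszKernel _)

lemma MuckApq.exists_wLpE_fracIntE_le [NeZero n] (h : MuckApq p q p' w) (hw : Measurable w)
    (hpos : ∀ᵐ x, 0 < w x) (hp : 1 < p) (hpq : p < q)
    (hq : 1 / q = 1 / p - α / n) (hp' : 1 / p + 1 / p' = 1) :
    ∃ K : ℝ≥0∞, K ≠ ⊤ ∧ ∀ {f}, MemLocWLp p (fun x => w x ^ p) f → ∀ a {r}, 0 < r →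
      wLpE q (fun x => w x ^ q) (fracIntE α f) (ball a r) ≤
        K * wSet (fun x => w x ^ q) (ball a r) ^ (1 / q) *
          ∫⁻ t in Ioi r, wLp p (fun x => w x ^ p) f (ball a t) *
            wSet (fun x => w x ^ q) (ball a t) ^ (-(1 / q)) * ENNReal.ofReal t⁻¹ := by
  have hp₀ : 0 < p := by positivity
  have hdual : -p' + p' * p = p := by
    have hp'₀ : p' ≠ 0 := by
      rintro rfl
      rw [div_zero, add_zero, div_eq_one_iff_eq hp₀.ne'] at hp'
      exact hp.ne hp'
    field_simp at hp'
    linarith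
  have hdim : n * (1 / q + 1 / p') = n - α := by
    rw [hq, eq_sub_iff_add_eq'.2 hp']
    have := NeZero.ne n
    field_simp
    ring
  obtain ⟨K, hK, hle⟩ := h.exists_rpow_setLIntegral_rieszPotential_le hw hpos hp hpq hp'
  refine ⟨K, hK, fun {f} hf a r hr => ?_⟩
  have hlp (a : EuclideanSpace ℝ (Fin n)) (t : ℝ) :=
    wLp_eq_lintegral_dualDensity hw hpos hp₀.le hdual f (measurableSet_ball (x := a) (ε := t))
  have hfin (a : EuclideanSpace ℝ (Fin n)) {t : ℝ} (ht : 0 < t) :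
      ∫⁻ y in ball a t, dualDensity w p' f y ^ p ∂weightMeasure volume w (-p') ≠ ⊤ := by
    have := (hlp a t ▸ hf.2 a t ht).ne
    exact fun h => this (by rw [h, ENNReal.top_rpow_of_pos (by positivity)])
  simpa only [wLpE_eq_lintegral_weightMeasure hw q _ measurableSet_ball, hlp, hdim, localNormRatio,
    wSet_eq_weightMeasure w q measurableSet_ball,
    fracIntE_eq_lintegral_dualDensity hw hpos α p' f] using
    hle (measurable_dualDensity hw p' hf.1) hfin a hr

lemma MuckApq.wSet_rpow_ball_ne_top [NeZero n] (h : MuckApq p q p' w) (hw : Measurable w)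
    (hw₀ : ∀ x, 0 ≤ w x) (hpos : ∀ᵐ x, 0 < w x) (hq : 0 < q) (hp' : 0 < p') {s : ℝ} (hs : 0 ≤ s)
    (hsq : s ≤ q) (a : EuclideanSpace ℝ (Fin n)) {r : ℝ} (hr : 0 < r) :
    wSet (fun x => w x ^ s) (ball a r) ≠ ⊤ := by
  obtain ⟨C, hC, hpair⟩ := h.exists_isMuckenhouptPair hw hpos hq hp'
  have hfin := hpair.measure_ball_ne_top (by positivity) (by positivity) hC
    (isTwoSidedDoubling_addHaar volume) a hr
  rw [wSet_eq_weightMeasure w s measurableSet_ball]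
  exact ne_top_of_le_ne_top (ENNReal.add_ne_top.2 ⟨measure_ball_lt_top.ne, hfin⟩)
    (weightMeasure_le_add hw₀ hs hsq measurableSet_ball)

lemma wSet_ball_ne_zero (hv : Measurable v) (hpos : ∀ᵐ x, 0 < v x) (a : EuclideanSpace ℝ (Fin n))
    {r : ℝ} (hr : 0 < r) : wSet v (ball a r) ≠ 0 := by
  have hsupp : volume (Function.support fun x => ENNReal.ofReal (v x))ᶜ = 0 :=
    hpos.mono fun x hx => by simpa using hx
  rw [wSet, ← pos_iff_ne_zero, setLIntegral_pos_iff hv.ennreal_ofReal, inter_comm,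
    measure_inter_conull hsupp]
  exact measure_ball_pos volume a hr

lemma wLp_ball_le_morreyNorm_mul {a : EuclideanSpace ℝ (Fin n)} {r : ℝ} (hr : 0 < r)
    (hψ : 0 < ψ a r) (hv₀ : wSet v (ball a r) ≠ 0) (hv : wSet v (ball a r) ≠ ⊤) :
    wLp p v f (ball a r) ≤
      morreyNorm p v ψ f * (wSet v (ball a r) ^ (1 / p) * ENNReal.ofReal (ψ a r)) := by
  have hψ₀ : ENNReal.ofReal (ψ a r) ≠ 0 := by simpa using hψ
  calc wLp p v f (ball a r)
    _ = ((ENNReal.ofReal (ψ a r))⁻¹ * ENNReal.ofReal (ψ a r)) *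
          (wSet v (ball a r) ^ (-(1 / p)) * wSet v (ball a r) ^ (1 / p)) *
          wLp p v f (ball a r) := by
      rw [ENNReal.inv_mul_cancel hψ₀ ENNReal.ofReal_ne_top, ← ENNReal.rpow_add _ _ hv₀ hv]
      simp
    _ = ((ENNReal.ofReal (ψ a r))⁻¹ * wSet v (ball a r) ^ (-(1 / p)) * wLp p v f (ball a r)) *
          (wSet v (ball a r) ^ (1 / p) * ENNReal.ofReal (ψ a r)) := by ring
    _ ≤ morreyNorm p v ψ f * (wSet v (ball a r) ^ (1 / p) * ENNReal.ofReal (ψ a r)) := by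
      gcongr
      exact le_iSup₂_of_le a ⟨r, hr⟩ le_rfl

lemma lintegral_wLp_mul_le_morreyNorm_mul (hψ : ∀ a r, 0 < r → 0 < ψ a r)
    (hv₀ : ∀ a {r}, 0 < r → wSet v (ball a r) ≠ 0) (hv : ∀ a {r}, 0 < r → wSet v (ball a r) ≠ ⊤)
    (hf : morreyNorm p v ψ f ≠ ⊤) (g : ℝ → ℝ≥0∞) (a : EuclideanSpace ℝ (Fin n)) {r : ℝ}
    (hr : 0 < r) :
    ∫⁻ t in Ioi r, wLp p v f (ball a t) * g t * ENNReal.ofReal t⁻¹ ≤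
      morreyNorm p v ψ f * ∫⁻ t in Ioi r, wSet v (ball a t) ^ (1 / p) * g t *
        ENNReal.ofReal (ψ a t) * ENNReal.ofReal t⁻¹ := by
  rw [← lintegral_const_mul' _ _ hf]
  refine setLIntegral_mono' measurableSet_Ioi fun t ht => ?_
  have ht₀ : 0 < t := hr.trans ht
  calc wLp p v f (ball a t) * g t * ENNReal.ofReal t⁻¹
    _ ≤ morreyNorm p v ψ f * (wSet v (ball a t) ^ (1 / p) * ENNReal.ofReal (ψ a t)) * g t *
          ENNReal.ofReal t⁻¹ := by
      gcongr
      exact wLp_ball_le_morreyNorm_mul ht₀ (hψ a t ht₀) (hv₀ a ht₀) (hv a ht₀)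
    _ = _ := by ring

lemma morreyNormE_le {g : EuclideanSpace ℝ (Fin n) → ℝ≥0∞} {K : ℝ≥0∞}
    (h : ∀ a r, 0 < r → wLpE q v g (ball a r) ≤
      K * (wSet v (ball a r) ^ (1 / q) * ENNReal.ofReal (ψ a r))) :
    morreyNormE q v ψ g ≤ K := by
  refine iSup₂_le fun a ⟨r, hr⟩ => ?_
  calc (ENNReal.ofReal (ψ a r))⁻¹ * wSet v (ball a r) ^ (-(1 / q)) * wLpE q v g (ball a r)
    _ ≤ (ENNReal.ofReal (ψ a r))⁻¹ * wSet v (ball a r) ^ (-(1 / q)) *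
          (K * (wSet v (ball a r) ^ (1 / q) * ENNReal.ofReal (ψ a r))) := by
      gcongr
      exact h a r hr
    _ = ((ENNReal.ofReal (ψ a r))⁻¹ * ENNReal.ofReal (ψ a r)) *
          ((wSet v (ball a r) ^ (1 / q))⁻¹ * wSet v (ball a r) ^ (1 / q)) * K := by
      rw [ENNReal.rpow_neg]
      ring
    _ ≤ 1 * 1 * K := by
      gcongr <;> exact ENNReal.inv_mul_le_one _
    _ = K := by simp

lemma morreyNormE_le_mul_morreyNorm {u : EuclideanSpace ℝ (Fin n) → ℝ}
    {ψ₁ ψ₂ : EuclideanSpace ℝ (Fin n) → ℝ → ℝ} (hψ₁ : ∀ a r, 0 < r → 0 < ψ₁ a r)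
    (hv₀ : ∀ a {r}, 0 < r → wSet v (ball a r) ≠ 0) (hv : ∀ a {r}, 0 < r → wSet v (ball a r) ≠ ⊤)
    (hf : morreyNorm p v ψ₁ f ≠ ⊤) {g : EuclideanSpace ℝ (Fin n) → ℝ≥0∞} {K : ℝ≥0∞} {C : ℝ}
    (hC : 0 ≤ C)
    (hlocal : ∀ a {r}, 0 < r → wLpE q u g (ball a r) ≤ K * wSet u (ball a r) ^ (1 / q) *
      ∫⁻ t in Ioi r, wLp p v f (ball a t) * wSet u (ball a t) ^ (-(1 / q)) * ENNReal.ofReal t⁻¹)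
    (hcond : ∀ a r, 0 < r → ∫⁻ t in Ioi r, wSet v (ball a t) ^ (1 / p) *
      wSet u (ball a t) ^ (-(1 / q)) * ENNReal.ofReal (ψ₁ a t) * ENNReal.ofReal t⁻¹ ≤
        ENNReal.ofReal (C * ψ₂ a r)) :
    morreyNormE q u ψ₂ g ≤ K * ENNReal.ofReal C * morreyNorm p v ψ₁ f := by
  refine morreyNormE_le fun a r hr => ?_
  calc wLpE q u g (ball a r)
    _ ≤ K * wSet u (ball a r) ^ (1 / q) * ∫⁻ t in Ioi r, wLp p v f (ball a t) *
          wSet u (ball a t) ^ (-(1 / q)) * ENNReal.ofReal t⁻¹ := hlocal a hr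
    _ ≤ K * wSet u (ball a r) ^ (1 / q) *
          (morreyNorm p v ψ₁ f * ENNReal.ofReal (C * ψ₂ a r)) := by
      gcongr
      exact (lintegral_wLp_mul_le_morreyNorm_mul hψ₁ hv₀ hv hf _ a hr).trans
        (by gcongr; exact hcond a r hr)
    _ = K * ENNReal.ofReal C * morreyNorm p v ψ₁ f *
          (wSet u (ball a r) ^ (1 / q) * ENNReal.ofReal (ψ₂ a r)) := by
      rw [ENNReal.ofReal_mul hC]
      ring

end Morrey

/-- Let `0 < α < n`, `1 < p < n/α`, `1/q = 1/p − α/n`, `w ∈ A_{p,q}`, and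
let `ψ₁, ψ₂` be positive functions on `ℝⁿ × (0,∞)` with
`∫_r^∞ (w^p(B(a,t))^{1/p}/w^q(B(a,t))^{1/q})·ψ₁(a,t) dt/t ≤ C·ψ₂(a,r)` for all `(a,r)`.
Then `I_α` is bounded from `M^{p,w^p}_{ψ₁}` to `M^{q,w^q}_{ψ₂}`. -/
theorem statement14 {n : ℕ} (α p q p' : ℝ) (hα : 0 < α) (hαn : α < n)
    (hp : 1 < p) (hpn : p < (n : ℝ) / α) (hq : 1 / q = 1 / p - α / n)
    (hp' : 1 / p + 1 / p' = 1)
    (w : EuclideanSpace ℝ (Fin n) → ℝ) (hw : IsWeight w) (hApq : MuckApq p q p' w)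
    (ψ₁ ψ₂ : EuclideanSpace ℝ (Fin n) → ℝ → ℝ)
    (hψ₁ : ∀ a r, 0 < r → 0 < ψ₁ a r) (hψ₂ : ∀ a r, 0 < r → 0 < ψ₂ a r)
    (C : ℝ) (hC : 0 < C)
    (hcond : ∀ (a : EuclideanSpace ℝ (Fin n)) (r : ℝ), 0 < r →
      (∫⁻ t in Set.Ioi r,
        wSet (fun x => w x ^ p) (ball a t) ^ (1 / p) *
          wSet (fun x => w x ^ q) (ball a t) ^ (-(1 / q)) *
          ENNReal.ofReal (ψ₁ a t) * ENNReal.ofReal t⁻¹) ≤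
        ENNReal.ofReal (C * ψ₂ a r)) :
    ∃ C' : ℝ, 0 < C' ∧ ∀ f : EuclideanSpace ℝ (Fin n) → ℝ,
      MemLocWLp p (fun x => w x ^ p) f → morreyNorm p (fun x => w x ^ p) ψ₁ f < ⊤ →
      morreyNormE q (fun x => w x ^ q) ψ₂ (fracIntE α f) ≤
        ENNReal.ofReal C' * morreyNorm p (fun x => w x ^ p) ψ₁ f := by
  obtain ⟨hwm, hw₀, -, hpos⟩ := hw
  have hn : (0 : ℝ) < n := hα.trans hαn
  have : NeZero n := ⟨by rintro rfl; simp at hn⟩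
  have hp₀ : 0 < p := by positivity
  have hαp : α / n < 1 / p :=
    (one_div_div _ _).symm.trans_lt (one_div_lt_one_div_of_lt hp₀ hpn)
  have hq₀ : 0 < q := one_div_pos.1 (by linarith)
  have hpq : p < q := (one_div_lt_one_div hq₀ hp₀).1 (by linarith [div_pos hα hn])
  have hp'₀ : 0 < p' := one_div_pos.1 (by linarith [(div_lt_one hp₀).2 hp])
  have hwp₀ (a) {r : ℝ} (hr : 0 < r) : wSet (fun x => w x ^ p) (ball a r) ≠ 0 :=
    wSet_ball_ne_zero (hwm.pow_const p) (hpos.mono fun x hx => Real.rpow_pos_of_pos hx p) a hr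
  have hwp := hApq.wSet_rpow_ball_ne_top hwm hw₀ hpos hq₀ hp'₀ hp₀.le hpq.le
  obtain ⟨K, hK, hlocal⟩ := hApq.exists_wLpE_fracIntE_le hwm hpos hp hpq hq hp'
  lift K to NNReal using hK
  refine ⟨(K + 1) * C, by positivity, fun f hf hN => ?_⟩
  calc morreyNormE q (fun x => w x ^ q) ψ₂ (fracIntE α f)
    _ ≤ K * ENNReal.ofReal C * morreyNorm p (fun x => w x ^ p) ψ₁ f :=
      morreyNormE_le_mul_morreyNorm hψ₁ hwp₀ hwp hN.ne hC.le (hlocal hf) hcond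
    _ ≤ ENNReal.ofReal ((K + 1) * C) * morreyNorm p (fun x => w x ^ p) ψ₁ f := by
      rw [ENNReal.ofReal_mul (by positivity), ← NNReal.coe_one, ← NNReal.coe_add,
        ENNReal.ofReal_coe_nnreal]
      gcongr
      exact le_self_add
end
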